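/- arXiv:2309.12791 — 3 statements merged into one kernel-verified Lean document; each statement's English description precedes it below -/
import Mathlib

section
/- Let G and Γ be groups, let π : G → G/Z(G) be the quotient by the center, let ρ : Γ → G/Z(G) be a group homomorphism (a projective representation of Γ in G), and let ρ̃ : Γ → G be any set-theoretic lift of ρ (so π ∘ ρ̃ = ρ). Define z : Γ × Γ → Z(G) by z(γ,γ') = ρ̃(γ)·ρ̃(γ')·ρ̃(γγ')⁻¹, and let Γ act on G by γ·x = ρ̃(γ) x ρ̃(γ)⁻¹ (this is a homomorphism Γ → Aut(G) because z is central), forming the semidirect product G ⋊ Γ. Then a group automorphism α of G extends to a group automorphism of G ⋊ Γ (one whose restriction to the canonical copy of G is α) if and only if there exist an automorphism θ of Γ and a function c : Γ → Z(G) such that α(z(γ,γ'))·z(θ(γ),θ(γ'))⁻¹ = c(γ)·c(γ')·c(γγ')⁻¹ for all γ, γ' ∈ Γ (i.e., the cohomology class of α∘z in H²(Γ, Z(G)) with trivial Γ-action lies in the orbit of the class of z under Aut(Γ)). -/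
/-!
Since `Γ` acts on `G` through conjugation by `σ`, the elements `s γ = σ(γ)⁻¹ γ` of `G ⋊ Γ`
centralize `G`, and they multiply according to the cocycle `z⁻¹`. An automorphism extending `α`
preserves the centralizer of `G`, so it induces some `θ` on `Γ` and sends `s γ` to
`c(γ)⁻¹ s(θ γ)` with `c` central; comparing the two cocycles gives `α(z) z(θ, θ)⁻¹ = ∂c`.
Conversely, given such `θ` and `c`, the map `γ ↦ α(σ γ) s(θ γ) c(γ)⁻¹` is a homomorphism on `Γ`,
and together with `α` it defines the required automorphism.
-/

open SemidirectProduct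

section MulDefect

variable {M M' G H : Type*} [Group G] [Group H]

/-- The failure `f a * f b * (f (a * b))⁻¹` of a function to be multiplicative. It is the
`2`-cocycle of a projective representation when `f` is a lift of it, and the coboundary of `f`
when `f` takes central values. -/
def mulDefect [Mul M] (f : M → G) (a b : M) : G :=
  f a * f b * (f (a * b))⁻¹

variable [Mul M] [Mul M']

theorem mulDefect_eq_one_iff {f : M → G} {a b : M} :
    mulDefect f a b = 1 ↔ f a * f b = f (a * b) :=
  mul_inv_eq_one

theorem mulDefect_mulHom {F : Type*} [FunLike F M G] [MulHomClass F M G] (f : F) (a b : M) :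
    mulDefect f a b = 1 :=
  mulDefect_eq_one_iff.2 (map_mul f a b).symm

theorem map_mulDefect {F : Type*} [FunLike F G H] [MonoidHomClass F G H] (φ : F) (f : M → G)
    (a b : M) : φ (mulDefect f a b) = mulDefect (φ ∘ f) a b := by
  simp only [mulDefect, map_mul, map_inv, Function.comp_apply]

theorem mulDefect_comp {F : Type*} [FunLike F M' M] [MulHomClass F M' M] (f : M → G) (θ : F)
    (a b : M') : mulDefect (f ∘ θ) a b = mulDefect f (θ a) (θ b) := by
  simp only [mulDefect, map_mul, Function.comp_apply]

theorem mulDefect_mul {f g : M → G} (hfg : ∀ a b, Commute (f a) (g b)) (a b : M) :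
    mulDefect (f * g) a b = mulDefect f a b * mulDefect g a b := by
  have hcomm : Commute (f (a * b))⁻¹ (mulDefect g a b) :=
    (((hfg _ _).mul_right (hfg _ _)).mul_right (hfg _ _).inv_right).inv_left
  calc mulDefect (f * g) a b
      = f a * (g a * f b) * g b * (g (a * b))⁻¹ * (f (a * b))⁻¹ := by
        simp only [mulDefect, Pi.mul_apply]; group
    _ = f a * f b * (mulDefect g a b * (f (a * b))⁻¹) := by
        rw [← (hfg b a).eq, mulDefect]; group
    _ = mulDefect f a b * mulDefect g a b := by
        rw [← hcomm.eq, ← mul_assoc]; rfl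

end MulDefect

section Extension

variable {N₁ N₂ G₁ G₂ : Type*} [Group N₁] [Group N₂] [Group G₁] [Group G₂]
  {φ₁ : G₁ →* MulAut N₁} {φ₂ : G₂ →* MulAut N₂}

theorem inl_left_eq_self_of_right_eq_one {p : N₁ ⋊[φ₁] G₁} (hp : p.right = 1) :
    inl p.left = p :=
  SemidirectProduct.ext rfl hp.symm

theorem exists_mem_center_inl_eq {p : N₁ ⋊[φ₁] G₁} (hright : p.right = 1)
    (hcomm : ∀ x, Commute p (inl x)) : ∃ n ∈ Subgroup.center N₁, inl n = p := by
  have hp := inl_left_eq_self_of_right_eq_one hright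
  refine ⟨p.left, Subgroup.mem_center_iff.2 fun x => inl_injective (φ := φ₁) ?_, hp⟩
  rw [map_mul, map_mul, hp, (hcomm x).eq]

theorem right_map_eq_right_map_inr {F : N₁ ⋊[φ₁] G₁ →* N₂ ⋊[φ₂] G₂}
    (hF : ∀ x, (F (inl x)).right = 1) (p : N₁ ⋊[φ₁] G₁) :
    (F p).right = (F (inr p.right)).right := by
  conv_lhs => rw [← inl_left_mul_inr_right p, map_mul, mul_right, hF, one_mul]

theorem exists_mulEquiv_right_map {α : N₁ ≃* N₂} {F : N₁ ⋊[φ₁] G₁ ≃* N₂ ⋊[φ₂] G₂}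
    (hF : ∀ x, F (inl x) = inl (α x)) :
    ∃ θ : G₁ ≃* G₂, ∀ p, (F p).right = θ p.right := by
  have hright : ∀ p, (F p).right = (F (inr p.right)).right :=
    right_map_eq_right_map_inr (F := F.toMonoidHom) fun x => congrArg right (hF x)
  have hFsymm (y : N₂) : F.symm (inl y) = inl (α.symm y) := by
    rw [F.symm_apply_eq, hF, α.apply_symm_apply]
  have hright_symm : ∀ q, (F.symm q).right = (F.symm (inr q.right)).right :=
    right_map_eq_right_map_inr (F := F.symm.toMonoidHom) fun y => congrArg right (hFsymm y)
  refine ⟨MonoidHom.toMulEquiv (rightHom.comp (F.toMonoidHom.comp inr))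
    (rightHom.comp (F.symm.toMonoidHom.comp inr)) ?_ ?_, hright⟩
  · ext γ
    exact (hright_symm _).symm.trans (congrArg right (F.symm_apply_apply (inr γ)))
  · ext δ
    exact (hright _).symm.trans (congrArg right (F.apply_symm_apply (inr δ)))

theorem bijective_of_map_inl_of_right_map {α : N₁ ≃* N₂} {θ : G₁ ≃* G₂}
    {F : N₁ ⋊[φ₁] G₁ →* N₂ ⋊[φ₂] G₂} (hinl : ∀ x, F (inl x) = inl (α x))
    (hright : ∀ p, (F p).right = θ p.right) : Function.Bijective F := by
  constructor
  · rw [injective_iff_map_eq_one]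
    intro p hp
    have hp_right : p.right = 1 := by
      rw [← map_eq_one_iff θ θ.injective, ← hright, hp, one_right]
    rw [← inl_left_eq_self_of_right_eq_one hp_right] at hp ⊢
    rw [hinl, map_eq_one_iff _ inl_injective, map_eq_one_iff α α.injective] at hp
    rw [hp, map_one]
  · intro q
    let p : N₁ ⋊[φ₁] G₁ := inr (θ.symm q.right)
    have hr : (q * (F p)⁻¹).right = 1 := by simp [p, hright]
    refine ⟨inl (α.symm (q * (F p)⁻¹).left) * p, ?_⟩
    rw [map_mul, hinl, α.apply_symm_apply, inl_left_eq_self_of_right_eq_one hr,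
      inv_mul_cancel_right]

end Extension

section ConjugationAction

variable {G Γ : Type*} [Group G] [Group Γ] {φ : Γ →* MulAut G} {σ : Γ → G}

/-- The section `γ ↦ σ(γ)⁻¹ γ` of `G ⋊[φ] Γ → Γ`. When `φ` acts through conjugation by `σ`, its
values centralize the canonical copy of `G`. -/
def centralizingSection (φ : Γ →* MulAut G) (σ : Γ → G) (γ : Γ) : G ⋊[φ] Γ :=
  (inl (σ γ))⁻¹ * inr γ

theorem right_centralizingSection (γ : Γ) : (centralizingSection φ σ γ).right = γ := by
  simp [centralizingSection]

theorem inl_mul_centralizingSection (φ : Γ →* MulAut G) (σ : Γ → G) (γ : Γ) :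
    inl (σ γ) * centralizingSection φ σ γ = inr γ :=
  mul_inv_cancel_left _ _

theorem commute_centralizingSection_inl (hφ : ∀ γ, φ γ = MulAut.conj (σ γ)) (γ : Γ) (x : G) :
    Commute (centralizingSection φ σ γ) (inl x) := by
  have hconj : inr γ * inl x = inl (σ γ * x * (σ γ)⁻¹) * (inr γ : G ⋊[φ] Γ) := by
    rw [← MulAut.conj_apply, ← hφ, inl_aut, map_inv, inv_mul_cancel_right]
  rw [commute_iff_eq, centralizingSection, mul_assoc, hconj]
  simp only [map_mul, map_inv]
  group

theorem mulDefect_centralizingSection (hφ : ∀ γ, φ γ = MulAut.conj (σ γ)) (γ γ' : Γ) :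
    mulDefect (centralizingSection φ σ) γ γ' = inl (mulDefect σ γ γ')⁻¹ := by
  have hinr : (inl : G →* G ⋊[φ] Γ) ∘ σ * centralizingSection φ σ = inr :=
    funext (inl_mul_centralizingSection φ σ)
  have hdefect : 1 = inl (mulDefect σ γ γ') * mulDefect (centralizingSection φ σ) γ γ' := by
    rw [map_mulDefect, ← mulDefect_mul (f := inl ∘ σ)
      (fun a b => (commute_centralizingSection_inl hφ b (σ a)).symm), hinr, mulDefect_mulHom]
  rw [map_inv, eq_inv_of_mul_eq_one_right hdefect.symm]

theorem exists_monoidHom_centralizingSection_eq {H : Type*} [Group H]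
    (hφ : ∀ γ, φ γ = MulAut.conj (σ γ)) {f : G →* H} {e : Γ → H}
    (hcomm : ∀ γ x, Commute (e γ) (f x))
    (hdefect : ∀ γ γ', mulDefect e γ γ' = (f (mulDefect σ γ γ'))⁻¹) :
    ∃ F : G ⋊[φ] Γ →* H,
      (∀ x, F (inl x) = f x) ∧ ∀ γ, F (centralizingSection φ σ γ) = e γ := by
  let β : Γ → H := f ∘ σ * e
  have hβ_mul (γ γ' : Γ) : β (γ * γ') = β γ * β γ' := by
    rw [eq_comm, ← mulDefect_eq_one_iff, mulDefect_mul (f := f ∘ σ)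
      fun a b => (hcomm b (σ a)).symm, hdefect, ← map_mulDefect, mul_inv_cancel]
  have hβ_conj (γ : Γ) (x : G) : f (φ γ x) = β γ * f x * (β γ)⁻¹ := by
    rw [eq_mul_inv_iff_mul_eq]
    simp only [β, Pi.mul_apply, Function.comp_apply, hφ, MulAut.conj_apply, map_mul, map_inv,
      mul_assoc, (hcomm γ x).eq, inv_mul_cancel_left]
  refine ⟨SemidirectProduct.lift f (MonoidHom.mk' β hβ_mul) fun γ => MonoidHom.ext (hβ_conj γ),
    lift_inl _ _ _, fun γ => ?_⟩
  rw [centralizingSection, map_mul, map_inv, lift_inl, lift_inr]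
  exact inv_mul_cancel_left _ _

end ConjugationAction

section Lifting

variable {G₁ G₂ Γ₁ Γ₂ : Type*} [Group G₁] [Group G₂] [Group Γ₁] [Group Γ₂]
  {φ₁ : Γ₁ →* MulAut G₁} {φ₂ : Γ₂ →* MulAut G₂} {σ₁ : Γ₁ → G₁} {σ₂ : Γ₂ → G₂}

theorem exists_mulDefect_eq_of_map_inl (hφ₁ : ∀ γ, φ₁ γ = MulAut.conj (σ₁ γ))
    (hφ₂ : ∀ γ, φ₂ γ = MulAut.conj (σ₂ γ)) {α : G₁ ≃* G₂}
    {F : G₁ ⋊[φ₁] Γ₁ ≃* G₂ ⋊[φ₂] Γ₂} (hF : ∀ x, F (inl x) = inl (α x)) :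
    ∃ (θ : Γ₁ ≃* Γ₂) (c : Γ₁ → G₂), (∀ γ, c γ ∈ Subgroup.center G₂) ∧ ∀ γ γ',
      α (mulDefect σ₁ γ γ') * (mulDefect σ₂ (θ γ) (θ γ'))⁻¹ = mulDefect c γ γ' := by
  obtain ⟨θ, hθ⟩ := exists_mulEquiv_right_map hF
  let s₁ := centralizingSection φ₁ σ₁
  let s₂ := centralizingSection φ₂ σ₂
  have hcomm (γ : Γ₁) (y : G₂) : Commute (F (s₁ γ)) (inl y) := by
    obtain ⟨x, rfl⟩ := α.surjective y
    rw [← hF]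
    exact (commute_centralizingSection_inl hφ₁ γ x).map F
  have hdiff (γ : Γ₁) :
      ∃ n ∈ Subgroup.center G₂, inl n = (F (s₁ γ))⁻¹ * s₂ (θ γ) := by
    apply exists_mem_center_inl_eq
    · simp only [mul_right, inv_right, hθ, s₁, s₂, right_centralizingSection, inv_mul_cancel]
    · exact fun y => (hcomm γ y).inv_left.mul_left
        (commute_centralizingSection_inl hφ₂ (θ γ) y)
  choose c hc hc_eq using hdiff
  have hmul : (F ∘ s₁) * (inl ∘ c) = s₂ ∘ θ :=
    funext fun γ => by simp only [Pi.mul_apply, Function.comp_apply, hc_eq, mul_inv_cancel_left]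
  refine ⟨θ, c, hc, fun γ γ' => inl_injective (φ := φ₂) ?_⟩
  have hdefect : inl (α (mulDefect σ₁ γ γ'))⁻¹ * inl (mulDefect c γ γ') =
      (inl (mulDefect σ₂ (θ γ) (θ γ'))⁻¹ : G₂ ⋊[φ₂] Γ₂) := by
    rw [← map_inv α, ← hF, ← mulDefect_centralizingSection hφ₁,
      ← mulDefect_centralizingSection hφ₂, ← mulDefect_comp, ← hmul,
      mulDefect_mul (f := F ∘ s₁) (g := inl ∘ c) fun a b => hcomm a (c b),
      map_mulDefect, map_mulDefect]
  rw [map_mul, ← hdefect, map_inv, mul_inv_cancel_left]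

theorem exists_map_inl_of_mulDefect_eq (hφ₁ : ∀ γ, φ₁ γ = MulAut.conj (σ₁ γ))
    (hφ₂ : ∀ γ, φ₂ γ = MulAut.conj (σ₂ γ)) {α : G₁ →* G₂} {θ : Γ₁ →* Γ₂} {c : Γ₁ → G₂}
    (hc : ∀ γ, c γ ∈ Subgroup.center G₂)
    (hdefect : ∀ γ γ',
      α (mulDefect σ₁ γ γ') * (mulDefect σ₂ (θ γ) (θ γ'))⁻¹ = mulDefect c γ γ') :
    ∃ F : G₁ ⋊[φ₁] Γ₁ →* G₂ ⋊[φ₂] Γ₂,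
      (∀ x, F (inl x) = inl (α x)) ∧ ∀ p, (F p).right = θ p.right := by
  let s₂ := centralizingSection φ₂ σ₂
  let e : Γ₁ → G₂ ⋊[φ₂] Γ₂ := fun γ => s₂ (θ γ) * (inl (c γ))⁻¹
  have he_comm (γ : Γ₁) (y : G₂) : Commute (e γ) (inl y) := by
    have hc_comm : Commute (c γ) y := (Subgroup.mem_center_iff.1 (hc γ) y).symm
    exact (commute_centralizingSection_inl hφ₂ (θ γ) y).mul_left (hc_comm.map inl).inv_left
  have he_mul : e * inl ∘ c = s₂ ∘ θ := funext fun _ => inv_mul_cancel_right _ _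
  have he_defect (γ γ' : Γ₁) : mulDefect e γ γ' = (inl (α (mulDefect σ₁ γ γ')))⁻¹ := by
    have hmul : mulDefect e γ γ' * inl (mulDefect c γ γ') =
        inl (mulDefect σ₂ (θ γ) (θ γ'))⁻¹ := by
      rw [map_mulDefect, ← mulDefect_mul (g := inl ∘ c) fun a b => he_comm a (c b), he_mul,
        mulDefect_comp, mulDefect_centralizingSection hφ₂]
    rw [← hdefect, map_mul, ← mul_assoc, mul_eq_right] at hmul
    exact eq_inv_of_mul_eq_one_left hmul
  obtain ⟨F, hF_inl, hF_section⟩ :=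
    exists_monoidHom_centralizingSection_eq hφ₁ (f := inl.comp α)
      (fun γ x => he_comm γ (α x)) he_defect
  refine ⟨F, hF_inl, fun p => ?_⟩
  rw [right_map_eq_right_map_inr fun x => congrArg right (hF_inl x),
    ← inl_mul_centralizingSection φ₁ σ₁, map_mul, hF_inl, hF_section]
  simp [e, s₂, right_centralizingSection]

theorem automorphism_lifts_to_semidirect_iff_cocycle_in_aut_orbit_general
    (hφ₁ : ∀ γ, φ₁ γ = MulAut.conj (σ₁ γ)) (hφ₂ : ∀ γ, φ₂ γ = MulAut.conj (σ₂ γ))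
    (α : G₁ ≃* G₂) :
    (∃ F : G₁ ⋊[φ₁] Γ₁ ≃* G₂ ⋊[φ₂] Γ₂, ∀ x, F (inl x) = inl (α x)) ↔
    ∃ (θ : Γ₁ ≃* Γ₂) (c : Γ₁ → G₂), (∀ γ, c γ ∈ Subgroup.center G₂) ∧ ∀ γ γ',
      α (mulDefect σ₁ γ γ') * (mulDefect σ₂ (θ γ) (θ γ'))⁻¹ = mulDefect c γ γ' := by
  constructor
  · rintro ⟨F, hF⟩
    exact exists_mulDefect_eq_of_map_inl hφ₁ hφ₂ hF
  · rintro ⟨θ, c, hc, hdefect⟩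
    obtain ⟨F, hinl, hright⟩ := exists_map_inl_of_mulDefect_eq hφ₁ hφ₂
      (α := α.toMonoidHom) (θ := θ.toMonoidHom) hc hdefect
    exact ⟨MulEquiv.ofBijective F (bijective_of_map_inl_of_right_map hinl hright), hinl⟩

end Lifting

/-- Let `ρ : Γ → G/Z(G)` be a projective representation with set-theoretic lift
`ρ̃`, associated `Z(G)`-valued 2-cocycle `z(γ,γ') = ρ̃ γ * ρ̃ γ' * (ρ̃ (γγ'))⁻¹`, and let `Γ` act
on `G` by conjugation by `ρ̃`, forming `G ⋊ Γ`. A group automorphism `α` of `G` extends to an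
automorphism of `G ⋊ Γ` restricting to `α` on the canonical copy of `G` if and only if there
are `θ ∈ Aut(Γ)` and `c : Γ → Z(G)` with
`α (z γ γ') * (z (θ γ) (θ γ'))⁻¹ = c γ * c γ' * (c (γγ'))⁻¹` for all `γ, γ'`. -/
theorem automorphism_lifts_to_semidirect_iff_cocycle_in_aut_orbit
    {G Γ : Type} [Group G] [Group Γ]
    (ρ : Γ →* G ⧸ Subgroup.center G) (ρt : Γ → G)
    (hlift : ∀ γ, ((ρt γ : G ⧸ Subgroup.center G)) = ρ γ)
    (z : Γ → Γ → G)
    (hz : ∀ γ γ', z γ γ' = ρt γ * ρt γ' * (ρt (γ * γ'))⁻¹)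
    (hz_central : ∀ γ γ', z γ γ' ∈ Subgroup.center G)
    (act : Γ →* MulAut G)
    (hact : ∀ γ x, act γ x = ρt γ * x * (ρt γ)⁻¹)
    (α : G ≃* G) :
    (∃ α' : (G ⋊[act] Γ) ≃* (G ⋊[act] Γ),
        ∀ x : G, α' (SemidirectProduct.inl x) = SemidirectProduct.inl (α x)) ↔
    (∃ (θ : Γ ≃* Γ) (c : Γ → G), (∀ γ, c γ ∈ Subgroup.center G) ∧
        ∀ γ γ', α (z γ γ') * (z (θ γ) (θ γ'))⁻¹ = c γ * c γ' * (c (γ * γ'))⁻¹) := by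
  obtain rfl : z = mulDefect ρt := funext₂ hz
  have hconj (γ : Γ) : act γ = MulAut.conj (ρt γ) := MulEquiv.ext (hact γ)
  exact automorphism_lifts_to_semidirect_iff_cocycle_in_aut_orbit_general hconj hconj α
end

section
/- Let Γ be a finite group, ρ : Γ → U(n)/Z(U(n)) a projective unitary representation, ρ̃ : Γ → U(n) a set-theoretic lift of ρ, and z : Γ × Γ → Z(U(n)) the associated 2-cocycle z(γ,γ') = ρ̃(γ)ρ̃(γ')ρ̃(γγ')⁻¹. Form the semidirect product U(n) ⋊ Γ via the conjugation action γ·x = ρ̃(γ)xρ̃(γ)⁻¹, topologized with Γ discrete. Then the following are equivalent: (a) every topological-group automorphism of U(n) extends to a topological-group automorphism of U(n) ⋊ Γ restricting to it on U(n); (b) the complex-conjugation automorphism of U(n) (entrywise complex conjugation of matrices) extends to a topological-group automorphism of U(n) ⋊ Γ; (c) there exist an automorphism θ of Γ and a function c : Γ → Z(U(n)) such that z(γ,γ')⁻¹ · z(θ(γ),θ(γ'))⁻¹ = c(γ)·c(γ')·c(γγ')⁻¹ for all γ,γ' ∈ Γ (i.e., the class of z⁻¹ in H²(Γ, Z(U(n)))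 lies in the Aut(Γ)-orbit of the class of z). -/
open Topology

/-- The semidirect product of topological groups, topologized via the canonical bijection with
the product `N × Γ`. -/
instance semidirectProductTopology {N Γ : Type*} [Group N] [Group Γ]
    [TopologicalSpace N] [TopologicalSpace Γ] {φ : Γ →* MulAut N} :
    TopologicalSpace (N ⋊[φ] Γ) :=
  TopologicalSpace.induced (fun x => (x.left, x.right)) inferInstance

/-!
If `Γ` acts on `N` through conjugation by `ρ`, the elements `s(γ) = ρ(γ)⁻¹ · γ` of `N ⋊ Γ`
centralize `N` and satisfy `s(γ) s(δ) = z(γ, δ)⁻¹ s(γδ)`. An automorphism of `N ⋊ Γ` extending `β`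
has to preserve the centralizer of `N`, hence sends `s(γ)` to `c(γ)⁻¹ s(θ(γ))` with `c(γ)` central,
and it is multiplicative exactly when `β(z(γ, δ)) · z(θ(γ), θ(δ))⁻¹` is the coboundary of `c`. So
whether `β` extends depends only on its restriction to the center. For `N = U(n)` the center is a
circle. A continuous endomorphism of the circle lifts to a linear map of `ℝ`, so it is a power map,
and the only injective power maps are the identity and the inversion. The identity on the center
imposes no condition, as `θ = id` and `c = 1` work, and the inversion imposes the condition given
by complex conjugation.
-/

section Circle

open scoped Real

theorem exists_eq_circleExp_mul_of_continuous {e : AddChar ℝ Circle} (he : Continuous e) :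
    ∃ a : ℝ, ∀ t, e t = Circle.exp (a * t) := by
  obtain ⟨g, ⟨hg0, hg⟩, -⟩ := Circle.isCoveringMap_exp.existsUnique_continuousMap_lifts
    ⟨e, he⟩ 0 0 (by simp)
  replace hg : ∀ t, Circle.exp (g t) = e t := congrFun hg
  have hadd : ∀ s t, g (s + t) = g s + g t := fun s t => by
    refine congrFun (Circle.isCoveringMap_exp.eq_of_comp_eq (g₁ := fun s => g (s + t))
      (g₂ := fun s => g s + g t) (by fun_prop) (by fun_prop) ?_ 0 (by simp [hg0])) s
    ext1 s
    simp only [Function.comp_apply, Circle.exp_add, hg, AddChar.map_add_eq_mul]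
  let L : ℝ →L[ℝ] ℝ := (AddMonoidHom.mk' g hadd).toRealLinearMap g.continuous
  refine ⟨L 1, fun t => ?_⟩
  have hL : L t = L 1 * t := by simpa [mul_comm] using L.map_smul t 1
  rw [← hL, ← hg]
  rfl

theorem exists_eq_zpow_of_continuous {f : Circle →* Circle} (hf : Continuous f) :
    ∃ n : ℤ, ∀ w, f w = w ^ n := by
  obtain ⟨a, ha⟩ := exists_eq_circleExp_mul_of_continuous (e := f.compAddChar Real.probChar)
    (hf.comp Real.continuous_probChar)
  replace ha : ∀ t, f (Circle.exp t) = Circle.exp (a * t) := ha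
  have hperiod : Circle.exp (a * (2 * π)) = 1 := by rw [← ha, Circle.exp_two_pi, map_one]
  obtain ⟨n, hn⟩ := Circle.exp_eq_one.mp hperiod
  obtain rfl : a = n := mul_right_cancel₀ Real.two_pi_pos.ne' hn
  refine ⟨n, fun w => ?_⟩
  obtain ⟨t, rfl⟩ := Circle.exp_surjective w
  rw [ha, Circle.exp_intCast_mul]

theorem isUnit_of_injective_circle_zpow {n : ℤ}
    (hn : Function.Injective fun w : Circle => w ^ n) : IsUnit n := by
  have hn0 : n ≠ 0 := by
    rintro rfl
    exact Circle.exp_pi_ne_one (hn (a₁ := Circle.exp π) (a₂ := 1) (by simp))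
  have hroot : Circle.exp (2 * π / n) = 1 := hn <| by
    simp only [← Circle.exp_intCast_mul, one_zpow]
    rw [mul_div_cancel₀ _ (Int.cast_ne_zero.mpr hn0), Circle.exp_two_pi]
  obtain ⟨m, hm⟩ := Circle.exp_eq_one.mp hroot
  have hnm : (n : ℝ) * m = 1 := by
    field_simp at hm
    linarith
  exact IsUnit.of_mul_eq_one m (mod_cast hnm)

theorem circleHom_eq_self_or_eq_inv_of_continuous_of_injective {f : Circle →* Circle}
    (hf : Continuous f) (hf_inj : Function.Injective f) : (∀ w, f w = w) ∨ ∀ w, f w = w⁻¹ := by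
  obtain ⟨n, hn⟩ := exists_eq_zpow_of_continuous hf
  have hunit : IsUnit n := isUnit_of_injective_circle_zpow (funext hn ▸ hf_inj)
  rcases Int.isUnit_iff.mp hunit with rfl | rfl
  · simp [hn]
  · simp [hn]

end Circle

section UnitaryScalar

/-- The scalar unitaries `w ↦ w · 1` of a complex star algebra. -/
def unitaryScalar (A : Type*) [Semiring A] [StarRing A] [Algebra ℂ A] [StarModule ℂ A] :
    Circle →* unitary A where
  toFun w := ⟨algebraMap ℂ A w, Unitary.map_mem (StarAlgHom.ofId ℂ A) <| by
    rw [Unitary.mem_iff_star_mul_self, Complex.star_def, ← Circle.coe_inv_eq_conj,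
      ← Circle.coe_mul, inv_mul_cancel, Circle.coe_one]⟩
  map_one' := Subtype.ext (map_one _)
  map_mul' _ _ := Subtype.ext (map_mul _ _ _)

variable {A : Type*} [Semiring A] [StarRing A] [Algebra ℂ A] [StarModule ℂ A]

theorem unitaryScalar_injective [Nontrivial A] : Function.Injective (unitaryScalar A) :=
  fun _ _ h => Circle.ext (FaithfulSMul.algebraMap_injective ℂ A (congrArg Subtype.val h))

theorem continuous_unitaryScalar [TopologicalSpace A] [ContinuousSMul ℂ A] :
    Continuous (unitaryScalar A) :=
  Continuous.subtype_mk ((continuous_algebraMap ℂ A).comp continuous_subtype_val) _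

theorem unitaryScalar_mem_center (w : Circle) :
    unitaryScalar A w ∈ Subgroup.center (unitary A) :=
  Subgroup.mem_center_iff.mpr fun u => Subtype.ext (Algebra.commutes (w : ℂ) (u : A)).symm

end UnitaryScalar

section CStarAlgebra

variable {A : Type*} [CStarAlgebra A]

theorem coe_mem_center_of_mem_center_unitary {u : unitary A}
    (hu : u ∈ Subgroup.center (unitary A)) : (u : A) ∈ Subalgebra.center ℂ A := by
  refine Subalgebra.mem_center_iff.mpr fun a => ?_
  have ha : a ∈ Submodule.span ℂ (unitary A : Set A) :=
    CStarAlgebra.span_unitary A ▸ Submodule.mem_top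
  induction ha using Submodule.span_induction with
  | mem v hv => exact congrArg Subtype.val (Subgroup.mem_center_iff.mp hu ⟨v, hv⟩)
  | zero => rw [zero_mul, mul_zero]
  | add a b _ _ ha hb => rw [add_mul, mul_add, ha, hb]
  | smul r a _ ha => rw [smul_mul_assoc, mul_smul_comm, ha]

theorem range_unitaryScalar [Nontrivial A] [Algebra.IsCentral ℂ A] :
    (unitaryScalar A).range = Subgroup.center (unitary A) := by
  refine le_antisymm ?_ fun u hu => ?_
  · rintro _ ⟨w, rfl⟩
    exact unitaryScalar_mem_center w
  · obtain ⟨r, hr⟩ := Algebra.mem_bot.mp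
      (Algebra.IsCentral.out (coe_mem_center_of_mem_center_unitary hu))
    have hnorm : ‖r‖ = 1 := by
      rw [← norm_algebraMap' A r, hr, CStarRing.norm_of_mem_unitary u.2]
    exact ⟨⟨r, mem_sphere_zero_iff_norm.mpr hnorm⟩, Subtype.ext hr⟩

end CStarAlgebra

theorem eq_self_or_eq_inv_on_center_of_circle_range {N : Type*} [Group N] [TopologicalSpace N]
    [T2Space N] {j : Circle →* N} (hj : Continuous j) (hj_inj : Function.Injective j)
    (hj_range : j.range = Subgroup.center N) {β : N ≃* N} (hβ : Continuous β) :
    (∀ u ∈ Subgroup.center N, β u = u) ∨ ∀ u ∈ Subgroup.center N, β u = u⁻¹ := by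
  have hemb := hj.isClosedEmbedding hj_inj
  have hβj : ∀ w, β (j w) ∈ j.range := fun w => by
    have hw : j w ∈ Subgroup.center N := hj_range ▸ ⟨w, rfl⟩
    exact hj_range.ge ((Subgroup.Characteristic.fixed inferInstance β).ge hw)
  choose f hf using hβj
  let F : Circle →* Circle := MonoidHom.mk' f fun v w => hj_inj <| by
    rw [map_mul j, hf, hf, hf, map_mul j, map_mul β]
  have hF : ∀ w, j (F w) = β (j w) := hf
  have hF_cont : Continuous F := hemb.continuous_iff.mpr <| by
    simpa only [Function.comp_def, hF] using hβ.comp hj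
  have hF_inj : Function.Injective F := fun v w h =>
    hj_inj (β.injective (by rw [← hF, ← hF, h]))
  refine (circleHom_eq_self_or_eq_inv_of_continuous_of_injective hF_cont hF_inj).imp
    (fun h u hu => ?_) fun h u hu => ?_
  · obtain ⟨w, rfl⟩ := hj_range.ge hu
    rw [← hF, h]
  · obtain ⟨w, rfl⟩ := hj_range.ge hu
    rw [← hF, h, map_inv]

section UnitaryGroup

open Matrix

variable {ι : Type*} [Fintype ι] [DecidableEq ι]

open scoped Matrix.Norms.L2Operator in
theorem range_unitaryScalar_matrix [Nonempty ι] :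
    (unitaryScalar (Matrix ι ι ℂ)).range = Subgroup.center (unitaryGroup ι ℂ) :=
  range_unitaryScalar

theorem eq_self_or_eq_inv_on_center_unitaryGroup {β : unitaryGroup ι ℂ ≃* unitaryGroup ι ℂ}
    (hβ : Continuous β) :
    (∀ u ∈ Subgroup.center (unitaryGroup ι ℂ), β u = u) ∨
      ∀ u ∈ Subgroup.center (unitaryGroup ι ℂ), β u = u⁻¹ := by
  cases isEmpty_or_nonempty ι
  · exact .inl fun u _ => Subsingleton.elim _ _
  · exact eq_self_or_eq_inv_on_center_of_circle_range continuous_unitaryScalar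
      unitaryScalar_injective range_unitaryScalar_matrix hβ

/-- Entrywise application of the involution of `R`, as an automorphism of the unitary group; for
`R = ℂ` this is the complex conjugation of matrices. -/
def unitaryGroupConj (ι R : Type*) [Fintype ι] [DecidableEq ι] [CommRing R] [StarRing R] :
    unitaryGroup ι R ≃* unitaryGroup ι R where
  toFun := UnitaryGroup.map_star
  invFun := UnitaryGroup.map_star
  left_inv _ := by ext; simp
  right_inv _ := by ext; simp
  map_mul' _ _ := Subtype.ext (Matrix.map_mul (f := starRingEnd R))

theorem continuous_unitaryGroupConj {R : Type*} [CommRing R] [StarRing R] [TopologicalSpace R]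
    [ContinuousStar R] : Continuous (unitaryGroupConj ι R) :=
  (continuous_subtype_val.matrix_map continuous_star).subtype_mk _

theorem unitaryGroupConj_eq_inv_of_mem_center {u : unitaryGroup ι ℂ}
    (hu : u ∈ Subgroup.center (unitaryGroup ι ℂ)) : unitaryGroupConj ι ℂ u = u⁻¹ := by
  cases isEmpty_or_nonempty ι
  · exact Subsingleton.elim _ _
  obtain ⟨w, rfl⟩ := range_unitaryScalar_matrix.ge hu
  have htranspose : UnitaryGroup.transpose (unitaryScalar (Matrix ι ι ℂ) w) = unitaryScalar _ w :=
    Subtype.ext <| by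
      change (algebraMap ℂ (Matrix ι ι ℂ) w)ᵀ = algebraMap ℂ _ w
      rw [algebraMap_eq_diagonal, diagonal_transpose]
  exact (UnitaryGroup.transpose_inv_eq_map_star _).symm.trans (congrArg _ htranspose)

end UnitaryGroup

theorem mul_inv_eq_mul_mul_inv_iff_of_mem_center {N : Type*} [Group N] {a b c d e : N}
    (hb : b ∈ Subgroup.center N) (hd : d ∈ Subgroup.center N) (he : e ∈ Subgroup.center N) :
    a * b⁻¹ = c * d * e⁻¹ ↔ c⁻¹ * d⁻¹ * b⁻¹ = a⁻¹ * e⁻¹ := by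
  have hcde : c * d * e⁻¹ * b = e⁻¹ * (b * (d * c)) := by
    rw [(IsMulCentral.comm hb _).symm.eq, (IsMulCentral.comm hd c).eq,
      (IsMulCentral.comm (inv_mem he) (c * d)).symm.eq,
      (IsMulCentral.comm hb _).left_comm]
  calc a * b⁻¹ = c * d * e⁻¹
      ↔ e⁻¹ * (b * (d * c)) = a := by rw [mul_inv_eq_iff_eq_mul, hcde, eq_comm]
    _ ↔ (b * (d * c))⁻¹ = (e * a)⁻¹ := by rw [inv_mul_eq_iff_eq_mul, inv_inj]
    _ ↔ c⁻¹ * d⁻¹ * b⁻¹ = a⁻¹ * e⁻¹ := by simp only [mul_inv_rev]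

section SemidirectProduct

open SemidirectProduct

variable {N Γ : Type*} [Group N] [Group Γ]

theorem right_map_eq_right_map_inr_s14 {N' Γ' : Type*} [Group N'] [Group Γ'] {φ : Γ →* MulAut N}
    {φ' : Γ' →* MulAut N'} {ψ : N ⋊[φ] Γ →* N' ⋊[φ'] Γ'} (hψ : ∀ x, (ψ (inl x)).right = 1)
    (p : N ⋊[φ] Γ) : (ψ p).right = (ψ (inr p.right)).right := by
  rw [← inl_left_mul_inr_right p, map_mul, mul_right, hψ, one_mul, inl_left_mul_inr_right]

theorem exists_mulEquiv_right_map_eq {φ : Γ →* MulAut N} {β : N ≃* N}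
    {ψ : (N ⋊[φ] Γ) ≃* (N ⋊[φ] Γ)} (hψ : ∀ x, ψ (inl x) = inl (β x)) :
    ∃ θ : Γ ≃* Γ, ∀ p, (ψ p).right = θ p.right := by
  have hright : ∀ p, (ψ p).right = (ψ (inr p.right)).right :=
    right_map_eq_right_map_inr_s14 (ψ := ψ.toMonoidHom) fun x => by simp [hψ]
  have hright_symm : ∀ p, (ψ.symm p).right = (ψ.symm (inr p.right)).right :=
    right_map_eq_right_map_inr_s14 (ψ := ψ.symm.toMonoidHom) fun x => by
      have hψ_symm : ψ.symm (inl x) = inl (β.symm x) := ψ.symm_apply_eq.mpr (by simp [hψ])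
      simp [hψ_symm]
  refine ⟨MonoidHom.toMulEquiv (rightHom.comp (ψ.toMonoidHom.comp inr))
    (rightHom.comp (ψ.symm.toMonoidHom.comp inr)) ?_ ?_, hright⟩
  · ext γ
    exact (hright_symm (ψ (inr γ))).symm.trans (by rw [ψ.symm_apply_apply, right_inr]; rfl)
  · ext γ
    exact (hright (ψ.symm (inr γ))).symm.trans (by rw [ψ.apply_symm_apply, right_inr]; rfl)

theorem continuous_of_map_inl_eq_inl {N' Γ' : Type*} [Group N'] [Group Γ'] [TopologicalSpace N]
    [TopologicalSpace N'] [ContinuousMul N'] [TopologicalSpace Γ] [DiscreteTopology Γ]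
    [TopologicalSpace Γ'] {φ : Γ →* MulAut N} {φ' : Γ' →* MulAut N'} {f : N → N'}
    (hf : Continuous f) {ψ : N ⋊[φ] Γ →* N' ⋊[φ'] Γ'} (hψ : ∀ x, ψ (inl x) = inl (f x)) :
    Continuous ψ := by
  have hcoords : Continuous fun p : N ⋊[φ] Γ => (p.left, p.right) := continuous_induced_dom
  have hψ_eq : ∀ p, ψ p = inl (f p.left) * ψ (inr p.right) := fun p => by
    rw [← hψ, ← map_mul, inl_left_mul_inr_right]
  refine continuous_induced_rng.mpr (Continuous.prodMk ?_ ?_)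
  · have hleft : ∀ p, (ψ p).left = f p.left * (ψ (inr p.right)).left := fun p => by
      rw [hψ_eq, mul_left, right_inl, map_one, MulAut.one_apply, left_inl]
    refine Continuous.congr ?_ fun p => (hleft p).symm
    exact (hf.comp hcoords.fst).mul
      ((continuous_of_discreteTopology (f := fun γ => (ψ (inr γ)).left)).comp hcoords.snd)
  · have hright : ∀ p, (ψ p).right = (ψ (inr p.right)).right := right_map_eq_right_map_inr_s14
      fun x => by rw [hψ, right_inl]
    refine Continuous.congr ?_ fun p => (hright p).symm
    exact (continuous_of_discreteTopology (f := fun γ => (ψ (inr γ)).right)).comp hcoords.snd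

theorem continuous_and_continuous_symm_of_map_inl_eq_inl [TopologicalSpace N] [ContinuousMul N]
    [TopologicalSpace Γ] [DiscreteTopology Γ] {φ : Γ →* MulAut N} {β : N ≃* N} (hβ : Continuous β)
    (hβ_symm : Continuous β.symm) {ψ : (N ⋊[φ] Γ) ≃* (N ⋊[φ] Γ)}
    (hψ : ∀ x, ψ (inl x) = inl (β x)) : Continuous ψ ∧ Continuous ψ.symm :=
  ⟨continuous_of_map_inl_eq_inl (ψ := ψ.toMonoidHom) hβ hψ,
    continuous_of_map_inl_eq_inl (ψ := ψ.symm.toMonoidHom) hβ_symm fun x =>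
      ψ.symm_apply_eq.mpr (by rw [hψ, β.apply_symm_apply])⟩

end SemidirectProduct

section LiftCocycle

open SemidirectProduct

variable {N Γ : Type*} [Group N] [Group Γ]

/-- The 2-cocycle `z(γ, δ) = ρ(γ) ρ(δ) ρ(γδ)⁻¹` of a set-theoretic lift `ρ : Γ → N` of a
homomorphism from `Γ` to `N` modulo its center. It is defined for every function `ρ`, with values
in `N`; see `liftCocycle_mem_center`. -/
def liftCocycle (ρ : Γ → N) (γ δ : Γ) : N :=
  ρ γ * ρ δ * (ρ (γ * δ))⁻¹

/-- The coordinates `(γ, x) ↦ x · ρ(γ)⁻¹ · γ` on `N ⋊ Γ`. When `Γ` acts on `N` through conjugation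
by `ρ`, the elements `ρ(γ)⁻¹ · γ` centralize `N`, so these coordinates exhibit `N ⋊ Γ` as the
product of `N` with a central extension of `Γ`. -/
@[simps]
def centralizingCoordinates (φ : Γ →* MulAut N) (ρ : Γ → N) : Γ × N ≃ N ⋊[φ] Γ where
  toFun p := ⟨p.2 * (ρ p.1)⁻¹, p.1⟩
  invFun q := (q.right, q.left * ρ q.right)
  left_inv p := by simp
  right_inv q := by simp

variable {φ : Γ →* MulAut N} {ρ : Γ → N}

theorem inl_mul_centralizingCoordinates (x y : N) (γ : Γ) :
    inl x * centralizingCoordinates φ ρ (γ, y) = centralizingCoordinates φ ρ (γ, x * y) := by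
  ext <;> simp [mul_assoc]

theorem liftCocycle_mem_center (hφ : ∀ γ x, φ γ x = ρ γ * x * (ρ γ)⁻¹) (γ δ : Γ) :
    liftCocycle ρ γ δ ∈ Subgroup.center N := by
  refine Subgroup.mem_center_iff.mpr fun x => ?_
  have hconj : ∀ y, ρ (γ * δ) * y * (ρ (γ * δ))⁻¹ = ρ γ * (ρ δ * y * (ρ δ)⁻¹) * (ρ γ)⁻¹ :=
    fun y => by rw [← hφ, map_mul φ, MulAut.mul_apply, hφ γ, hφ δ]
  calc x * liftCocycle ρ γ δ
      = ρ (γ * δ) * ((ρ (γ * δ))⁻¹ * x * ρ (γ * δ)) * (ρ (γ * δ))⁻¹ * liftCocycle ρ γ δ := by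
        group
    _ = liftCocycle ρ γ δ * x := by
        rw [hconj, liftCocycle]
        group

theorem commute_centralizingCoordinates_inl_iff (hφ : ∀ γ x, φ γ x = ρ γ * x * (ρ γ)⁻¹)
    (γ : Γ) (a x : N) :
    Commute (centralizingCoordinates φ ρ (γ, a)) (inl x) ↔ Commute a x := by
  have hleft : (centralizingCoordinates φ ρ (γ, a) * inl x).left = a * x * (ρ γ)⁻¹ := by
    simp [hφ, mul_assoc]
  have hleft' : (inl x * centralizingCoordinates φ ρ (γ, a)).left = x * a * (ρ γ)⁻¹ := by
    simp [mul_assoc]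
  have hright : (centralizingCoordinates φ ρ (γ, a) * inl x).right =
      (inl x * centralizingCoordinates φ ρ (γ, a)).right := by simp
  rw [commute_iff_eq, SemidirectProduct.ext_iff, and_iff_left hright, hleft, hleft',
    mul_left_inj, commute_iff_eq]

theorem centralizingCoordinates_mul (hφ : ∀ γ x, φ γ x = ρ γ * x * (ρ γ)⁻¹) (γ δ : Γ) (x y : N) :
    centralizingCoordinates φ ρ (γ, x) * centralizingCoordinates φ ρ (δ, y) =
      centralizingCoordinates φ ρ (γ * δ, x * y * (liftCocycle ρ γ δ)⁻¹) := by
  have hcomm := IsMulCentral.comm (liftCocycle_mem_center hφ γ δ) (ρ (γ * δ))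
  ext
  · calc x * (ρ γ)⁻¹ * φ γ (y * (ρ δ)⁻¹)
        = x * y * (liftCocycle ρ γ δ * ρ (γ * δ))⁻¹ := by
          rw [hφ, liftCocycle]; group
      _ = x * y * (liftCocycle ρ γ δ)⁻¹ * (ρ (γ * δ))⁻¹ := by
          rw [hcomm.eq]; group
  · rfl

theorem exists_coboundary_of_map_inl_eq_inl (hφ : ∀ γ x, φ γ x = ρ γ * x * (ρ γ)⁻¹)
    {β : N ≃* N} {ψ : (N ⋊[φ] Γ) ≃* (N ⋊[φ] Γ)} (hψ : ∀ x, ψ (inl x) = inl (β x)) :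
    ∃ (θ : Γ ≃* Γ) (c : Γ → N), (∀ γ, c γ ∈ Subgroup.center N) ∧
      ∀ γ δ, β (liftCocycle ρ γ δ) * (liftCocycle ρ (θ γ) (θ δ))⁻¹ =
        c γ * c δ * (c (γ * δ))⁻¹ := by
  obtain ⟨θ, hθ⟩ := exists_mulEquiv_right_map_eq hψ
  let C := centralizingCoordinates φ ρ
  let c : Γ → N := fun γ => (C.symm (ψ (C (γ, 1)))).2⁻¹
  have hψC : ∀ γ, ψ (C (γ, 1)) = C (θ γ, (c γ)⁻¹) := fun γ =>
    C.symm_apply_eq.mp (Prod.ext (hθ _) (inv_inv _).symm)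
  have hc : ∀ γ, c γ ∈ Subgroup.center N := fun γ => by
    refine inv_mem_iff.mp (Subgroup.mem_center_iff.mpr fun x => ?_)
    have hcomm := ((commute_centralizingCoordinates_inl_iff hφ γ 1 (β.symm x)).mpr
      (Commute.one_left _)).map ψ
    rw [hψ, β.apply_symm_apply, hψC] at hcomm
    exact ((commute_centralizingCoordinates_inl_iff hφ _ _ x).mp hcomm).symm
  refine ⟨θ, c, hc, fun γ δ => ?_⟩
  rw [mul_inv_eq_mul_mul_inv_iff_of_mem_center (liftCocycle_mem_center hφ _ _) (hc δ) (hc _)]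
  have hC : C (θ (γ * δ), (c γ)⁻¹ * (c δ)⁻¹ * (liftCocycle ρ (θ γ) (θ δ))⁻¹) =
      C (θ (γ * δ), (β (liftCocycle ρ γ δ))⁻¹ * (c (γ * δ))⁻¹) :=
    calc C (θ (γ * δ), (c γ)⁻¹ * (c δ)⁻¹ * (liftCocycle ρ (θ γ) (θ δ))⁻¹)
        = ψ (C (γ, 1) * C (δ, 1)) := by
          rw [map_mul ψ, hψC, hψC, centralizingCoordinates_mul hφ, map_mul θ]
      _ = ψ (inl (liftCocycle ρ γ δ)⁻¹ * C (γ * δ, 1)) := by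
          rw [centralizingCoordinates_mul hφ, inl_mul_centralizingCoordinates, one_mul, one_mul,
            mul_one]
      _ = C (θ (γ * δ), (β (liftCocycle ρ γ δ))⁻¹ * (c (γ * δ))⁻¹) := by
          rw [map_mul ψ, hψ, hψC, inl_mul_centralizingCoordinates, map_inv]
  exact congrArg Prod.snd (C.injective hC)

theorem exists_map_inl_eq_inl_of_coboundary (hφ : ∀ γ x, φ γ x = ρ γ * x * (ρ γ)⁻¹)
    {β : N ≃* N} {θ : Γ ≃* Γ} {c : Γ → N} (hc : ∀ γ, c γ ∈ Subgroup.center N)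
    (hβ : ∀ γ δ, β (liftCocycle ρ γ δ) * (liftCocycle ρ (θ γ) (θ δ))⁻¹ =
      c γ * c δ * (c (γ * δ))⁻¹) :
    ∃ ψ : (N ⋊[φ] Γ) ≃* (N ⋊[φ] Γ), ∀ x, ψ (inl x) = inl (β x) := by
  let C := centralizingCoordinates φ ρ
  let Ψ : N ⋊[φ] Γ ≃ N ⋊[φ] Γ := C.symm.trans <|
    (Equiv.prodShear θ.toEquiv fun γ => β.toEquiv.trans (Equiv.mulRight (c γ)⁻¹)).trans C
  have hΨ : ∀ γ x, Ψ (C (γ, x)) = C (θ γ, β x * (c γ)⁻¹) := fun γ x => by simp [Ψ]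
  have hΨ_mul : ∀ p q, Ψ (p * q) = Ψ p * Ψ q := fun p q => by
    obtain ⟨⟨γ, x⟩, rfl⟩ := C.surjective p
    obtain ⟨⟨δ, y⟩, rfl⟩ := C.surjective q
    have hz := (mul_inv_eq_mul_mul_inv_iff_of_mem_center (liftCocycle_mem_center hφ _ _) (hc δ)
      (hc _)).mp (hβ γ δ)
    have hcomm := IsMulCentral.comm (inv_mem (hc γ)) (β y)
    rw [centralizingCoordinates_mul hφ, hΨ, hΨ, hΨ, centralizingCoordinates_mul hφ, ← map_mul θ]
    congr 2
    calc β (x * y * (liftCocycle ρ γ δ)⁻¹) * (c (γ * δ))⁻¹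
        = β x * β y * ((β (liftCocycle ρ γ δ))⁻¹ * (c (γ * δ))⁻¹) := by
          simp only [map_mul, map_inv, mul_assoc]
      _ = β x * (β y * (c γ)⁻¹) * (c δ)⁻¹ * (liftCocycle ρ (θ γ) (θ δ))⁻¹ := by
          simp only [← hz, mul_assoc]
      _ = β x * (c γ)⁻¹ * (β y * (c δ)⁻¹) * (liftCocycle ρ (θ γ) (θ δ))⁻¹ := by
          simp only [← hcomm.eq, mul_assoc]
  refine ⟨MulEquiv.mk Ψ hΨ_mul, fun x => mul_right_cancel (b := Ψ (C (1, 1))) ?_⟩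
  calc Ψ (inl x) * Ψ (C (1, 1))
      = Ψ (C (1, x)) := by rw [← hΨ_mul, inl_mul_centralizingCoordinates, mul_one]
    _ = inl (β x) * Ψ (C (1, 1)) := by
        rw [hΨ, hΨ, inl_mul_centralizingCoordinates, map_one β, one_mul]

end LiftCocycle

theorem unitary_semidirect_lifting_tfae_general {ι Γ : Type*} [Fintype ι] [DecidableEq ι]
    [Group Γ] [TopologicalSpace Γ] [DiscreteTopology Γ] (ρt : Γ → Matrix.unitaryGroup ι ℂ)
    (act : Γ →* MulAut (Matrix.unitaryGroup ι ℂ))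
    (hact : ∀ γ x, act γ x = ρt γ * x * (ρt γ)⁻¹) :
    List.TFAE
      [ ∀ β : Matrix.unitaryGroup ι ℂ ≃* Matrix.unitaryGroup ι ℂ,
          Continuous ⇑β → Continuous ⇑β.symm →
          ∃ ψ : (Matrix.unitaryGroup ι ℂ ⋊[act] Γ) ≃* (Matrix.unitaryGroup ι ℂ ⋊[act] Γ),
            Continuous ⇑ψ ∧ Continuous ⇑ψ.symm ∧
            ∀ x, ψ (SemidirectProduct.inl x) = SemidirectProduct.inl (β x),
        ∃ ψ : (Matrix.unitaryGroup ι ℂ ⋊[act] Γ) ≃* (Matrix.unitaryGroup ι ℂ ⋊[act] Γ),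
          Continuous ⇑ψ ∧ Continuous ⇑ψ.symm ∧
          ∀ x : Matrix.unitaryGroup ι ℂ,
            (ψ (SemidirectProduct.inl x)).right = 1 ∧
            ((ψ (SemidirectProduct.inl x)).left : Matrix ι ι ℂ) =
              (x : Matrix ι ι ℂ).map (starRingEnd ℂ),
        ∃ (θ : Γ ≃* Γ) (c : Γ → Matrix.unitaryGroup ι ℂ),
          (∀ γ, c γ ∈ Subgroup.center (Matrix.unitaryGroup ι ℂ)) ∧
          ∀ γ γ', (liftCocycle ρt γ γ')⁻¹ * (liftCocycle ρt (θ γ) (θ γ'))⁻¹ =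
            c γ * c γ' * (c (γ * γ'))⁻¹ ] := by
  have hz := liftCocycle_mem_center hact
  tfae_have 1 → 2 := fun hextend => by
    obtain ⟨ψ, hψ, hψ_symm, hψ_inl⟩ := hextend (unitaryGroupConj ι ℂ) continuous_unitaryGroupConj
      continuous_unitaryGroupConj
    exact ⟨ψ, hψ, hψ_symm, fun x => by rw [hψ_inl]; exact ⟨rfl, rfl⟩⟩
  tfae_have 2 → 3 := fun ⟨ψ, _, _, hψ⟩ => by
    obtain ⟨θ, c, hc, hβ⟩ := exists_coboundary_of_map_inl_eq_inl (ψ := ψ)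
      (β := unitaryGroupConj ι ℂ) hact
      fun x => SemidirectProduct.ext (Subtype.ext (hψ x).2) (hψ x).1
    exact ⟨θ, c, hc, fun γ δ => by rw [← hβ, unitaryGroupConj_eq_inv_of_mem_center (hz γ δ)]⟩
  tfae_have 3 → 1 := fun ⟨θ, c, hc, hcoboundary⟩ β hβ hβ_symm => by
    obtain ⟨ψ, hψ⟩ : ∃ ψ : (Matrix.unitaryGroup ι ℂ ⋊[act] Γ) ≃* _,
        ∀ x, ψ (SemidirectProduct.inl x) = SemidirectProduct.inl (β x) := by
      rcases eq_self_or_eq_inv_on_center_unitaryGroup hβ with hid | hinv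
      · refine exists_map_inl_eq_inl_of_coboundary hact (θ := MulEquiv.refl Γ) (c := 1)
          (fun _ => one_mem _) fun γ δ => ?_
        simp [hid _ (hz γ δ)]
      · refine exists_map_inl_eq_inl_of_coboundary hact (θ := θ) hc fun γ δ => ?_
        rw [hinv _ (hz γ δ), hcoboundary]
    obtain ⟨hψ_cont, hψ_symm⟩ := continuous_and_continuous_symm_of_map_inl_eq_inl hβ hβ_symm hψ
    exact ⟨ψ, hψ_cont, hψ_symm, hψ⟩
  tfae_finish

/-- Let `Γ` be finite, `ρ : Γ → U(n)/Z(U(n))` a projective unitary representation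
with set-theoretic lift `ρ̃` and associated 2-cocycle `z`, and form `U(n) ⋊ Γ` via conjugation
by `ρ̃` (with `Γ` discrete). TFAE: (a) every topological-group automorphism of `U(n)` extends to
a topological-group automorphism of `U(n) ⋊ Γ` restricting to it on `U(n)`; (b) the
complex-conjugation automorphism of `U(n)` so extends; (c) there are `θ ∈ Aut(Γ)` and
`c : Γ → Z(U(n))` with `(z γ γ')⁻¹ * (z (θ γ) (θ γ'))⁻¹ = c γ * c γ' * (c (γγ'))⁻¹`. -/
theorem unitary_semidirect_lifting_tfae
    {n : ℕ} {Γ : Type} [Group Γ] [Finite Γ] [TopologicalSpace Γ] [DiscreteTopology Γ]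
    (ρ : Γ →* Matrix.unitaryGroup (Fin n) ℂ ⧸ Subgroup.center (Matrix.unitaryGroup (Fin n) ℂ))
    (ρt : Γ → Matrix.unitaryGroup (Fin n) ℂ)
    (hlift : ∀ γ, ((ρt γ : Matrix.unitaryGroup (Fin n) ℂ ⧸
        Subgroup.center (Matrix.unitaryGroup (Fin n) ℂ))) = ρ γ)
    (z : Γ → Γ → Matrix.unitaryGroup (Fin n) ℂ)
    (hz : ∀ γ γ', z γ γ' = ρt γ * ρt γ' * (ρt (γ * γ'))⁻¹)
    (hz_central : ∀ γ γ', z γ γ' ∈ Subgroup.center (Matrix.unitaryGroup (Fin n) ℂ))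
    (act : Γ →* MulAut (Matrix.unitaryGroup (Fin n) ℂ))
    (hact : ∀ γ x, act γ x = ρt γ * x * (ρt γ)⁻¹) :
    List.TFAE
      [ ∀ β : Matrix.unitaryGroup (Fin n) ℂ ≃* Matrix.unitaryGroup (Fin n) ℂ,
          Continuous ⇑β → Continuous ⇑β.symm →
          ∃ ψ : (Matrix.unitaryGroup (Fin n) ℂ ⋊[act] Γ) ≃*
              (Matrix.unitaryGroup (Fin n) ℂ ⋊[act] Γ),
            Continuous ⇑ψ ∧ Continuous ⇑ψ.symm ∧
            ∀ x, ψ (SemidirectProduct.inl x) = SemidirectProduct.inl (β x),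
        ∃ ψ : (Matrix.unitaryGroup (Fin n) ℂ ⋊[act] Γ) ≃*
            (Matrix.unitaryGroup (Fin n) ℂ ⋊[act] Γ),
          Continuous ⇑ψ ∧ Continuous ⇑ψ.symm ∧
          ∀ x : Matrix.unitaryGroup (Fin n) ℂ,
            (ψ (SemidirectProduct.inl x)).right = 1 ∧
            ((ψ (SemidirectProduct.inl x)).left : Matrix (Fin n) (Fin n) ℂ) =
              (x : Matrix (Fin n) (Fin n) ℂ).map (starRingEnd ℂ),
        ∃ (θ : Γ ≃* Γ) (c : Γ → Matrix.unitaryGroup (Fin n) ℂ),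
          (∀ γ, c γ ∈ Subgroup.center (Matrix.unitaryGroup (Fin n) ℂ)) ∧
          ∀ γ γ', (z γ γ')⁻¹ * (z (θ γ) (θ γ'))⁻¹ = c γ * c γ' * (c (γ * γ'))⁻¹ ] := by
  obtain rfl : z = liftCocycle ρt := funext₂ hz
  exact unitary_semidirect_lifting_tfae_general ρt act hact
end

section
/- For every positive integer d there exist a positive integer n divisible by d, a finite group Γ, and an action of Γ on U(n) by topological-group automorphisms, such that the complex-conjugation automorphism of U(n) (entrywise complex conjugation of matrices) does not extend to a topological-group automorphism of the semidirect product U(n) ⋊ Γ; consequently no outer topological-group automorphism of U(n) extends to U(n) ⋊ Γ. -/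
open Topology

/-!
Let `S` and `C` be the shift and clock matrices tensored with an identity, so that `⁅S, C⁆ = ω` is
a scalar of order `3`. Conjugation by `S` and `C` gives an action of `(ℤ/3)²` on `U(n)`, which we
inflate to `Γ = ℤ/91 ⋊ (ℤ/3)²`: the automorphism group of the cyclic group `ℤ/91` is abelian, so
every automorphism of `Γ` induces the identity on `(ℤ/3)²`. If `β` extends to `ψ`, the commuting
lifts `s, t ∈ Γ` of the two generators therefore have images `ψ s, ψ t` that act on `U(n)` up to
inner automorphisms as `s, t` do, and comparing the relations `⁅s, t⁆ = 1` and `⁅ψ s, ψ t⁆ = 1`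
inside `U(n)` yields `β ω = ω`. Complex conjugation inverts `ω`, so it does not extend.

For general `β`, regard `β` as a representation of `U(n)`. Its weights for the diagonal torus form a
family of `n` vectors of `ℤⁿ` stable under permuting coordinates, which forces them to be the
vectors `(b, …, b, c, b, …, b)`, unless all of them are constant, which injectivity excludes.
Injectivity of `β` on the torus and on the scalars gives `c - b = ±1` and `n b + (c - b) = ±1`,
hence `b = 0` and `c = ±1` because `n > 2`, and `β ω = ω` excludes `c = -1`. So `β` preserves the
trace; it then extends to a `⋆`-automorphism of the matrix algebra, and such automorphisms are
inner.
-/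

section CircleEndomorphisms

open MeasureTheory AddCircle

theorem exists_fourierCoeff_ne_zero {T : ℝ} [Fact (0 < T)] {f : C(AddCircle T, ℂ)} (hf : f ≠ 0) :
    ∃ k : ℤ, fourierCoeff f k ≠ 0 := by
  contrapose! hf
  have hsummable : Summable (fourierCoeff f) := summable_zero.congr fun k => (hf k).symm
  ext x
  refine (has_pointwise_sum_fourier_series_of_summable hsummable x).unique ?_
  simp only [hf, zero_smul, ContinuousMap.zero_apply, hasSum_zero]

theorem addChar_circle_eq_toCircle_zpow {T : ℝ} [Fact (0 < T)] (χ : AddChar (AddCircle T) Circle)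
    (hχ : Continuous χ) : ∃ k : ℤ, ∀ x, χ x = toCircle x ^ k := by
  let f : C(AddCircle T, ℂ) := ⟨fun x => χ x, by fun_prop⟩
  have hf : f ≠ 0 := fun h => (χ 0).coe_ne_zero (DFunLike.congr_fun h 0)
  obtain ⟨k, hk⟩ := exists_fourierCoeff_ne_zero hf
  refine ⟨k, fun a => ?_⟩
  -- Translating by `a` multiplies the integrand of the coefficient by `χ a / toCircle a ^ k`.
  have htranslate : fourierCoeff f k = fourier (-k) a * f a * fourierCoeff f k := by
    simp only [fourierCoeff, smul_eq_mul]
    rw [← integral_const_mul, ← integral_add_left_eq_self _ a]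
    refine integral_congr_ae (.of_forall fun x => ?_)
    simp only [fourier_apply, smul_add, neg_smul, toCircle_add, Circle.coe_mul, fourier_neg',
      ContinuousMap.coe_mk, AddChar.map_add_eq_mul, f]
    ring
  have hone : (toCircle a ^ k)⁻¹ * χ a = 1 := by
    ext
    simpa [f, fourier_apply, toCircle_zsmul, toCircle_neg]
      using (mul_eq_right₀ hk).mp htranslate.symm
  exact (inv_mul_eq_one.mp hone).symm

theorem circle_monoidHom_eq_zpow (χ : Circle →* Circle) (hχ : Continuous χ) :
    ∃ k : ℤ, ∀ z, χ z = z ^ k := by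
  have : Fact (0 < 2 * Real.pi) := ⟨Real.two_pi_pos⟩
  obtain ⟨k, hk⟩ := addChar_circle_eq_toCircle_zpow (T := 2 * Real.pi)
    (χ.compAddChar toCircle_addChar) (hχ.comp continuous_toCircle)
  refine ⟨k, fun z => ?_⟩
  obtain ⟨x, rfl⟩ := (homeomorphCircle Real.two_pi_pos.ne').surjective z
  rw [homeomorphCircle_apply]
  exact hk x

theorem eq_zero_of_forall_circle_zpow_eq_one {k : ℤ} (hk : ∀ z : Circle, z ^ k = 1) : k = 0 := by
  by_contra hne
  refine Circle.exp_pi_ne_one ?_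
  rw [← hk (.exp (Real.pi / k)), ← Circle.exp_intCast_mul, mul_div_cancel₀ _ (by simpa)]

theorem circle_zpow_left_injective :
    Function.Injective fun (k : ℤ) (z : Circle) => z ^ k := fun j k hjk =>
  sub_eq_zero.mp <| eq_zero_of_forall_circle_zpow_eq_one fun z => by
    rw [zpow_sub, show z ^ j = z ^ k from congrFun hjk z, mul_inv_cancel]

theorem isUnit_of_circle_zpow_injective {k : ℤ} (hk : Function.Injective fun z : Circle => z ^ k) :
    IsUnit k := by
  have hk0 : (k : ℝ) ≠ 0 := by
    intro hzero
    obtain rfl : k = 0 := mod_cast hzero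
    exact one_ne_zero (eq_zero_of_forall_circle_zpow_eq_one fun z => hk (by simp))
  have hexp : Circle.exp (2 * Real.pi / k) = 1 := hk <| by
    simp [← Circle.exp_intCast_mul, mul_div_cancel₀ _ hk0]
  obtain ⟨m, hm⟩ := Circle.exp_eq_one.mp hexp
  have hmk : (m : ℝ) * k = 1 := by
    rw [div_eq_iff hk0] at hm
    exact mul_right_cancel₀ Real.two_pi_pos.ne' (by linarith)
  exact .of_mul_eq_one m (by exact_mod_cast (mul_comm _ _).trans hmk)

end CircleEndomorphisms

section TorusCharacters

variable {ι : Type*} [Fintype ι]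

/-- The character `t ↦ ∏ i, t i ^ w i` of the torus `ι → Circle` with weight `w`. -/
noncomputable def torusCharacter (w : ι → ℤ) : (ι → Circle) →* Circle where
  toFun t := ∏ i, t i ^ w i
  map_one' := by simp
  map_mul' s t := by simp [mul_zpow, Finset.prod_mul_distrib]

theorem torusCharacter_apply (w : ι → ℤ) (t : ι → Circle) :
    torusCharacter w t = ∏ i, t i ^ w i :=
  rfl

theorem torusCharacter_mulSingle [DecidableEq ι] (w : ι → ℤ) (i : ι) (z : Circle) :
    torusCharacter w (Pi.mulSingle i z) = z ^ w i := by
  rw [torusCharacter_apply, Finset.prod_eq_single_of_mem i (Finset.mem_univ i)]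
  · rw [Pi.mulSingle_eq_same]
  · intro j _ hji
    rw [Pi.mulSingle_eq_of_ne hji, one_zpow]

theorem torusCharacter_injective : Function.Injective (torusCharacter (ι := ι)) := by
  classical
  intro v w hvw
  ext i
  refine circle_zpow_left_injective (funext fun z => ?_)
  change z ^ v i = z ^ w i
  rw [← torusCharacter_mulSingle, hvw, torusCharacter_mulSingle]

theorem torusCharacter_comp_perm (w : ι → ℤ) (σ : Equiv.Perm ι) (t : ι → Circle) :
    torusCharacter w (t ∘ σ) = torusCharacter (w ∘ σ.symm) t := by
  simpa [torusCharacter_apply] using Equiv.prod_comp σ fun i => t i ^ w (σ.symm i)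

theorem exists_eq_torusCharacter (χ : (ι → Circle) →* Circle) (hχ : Continuous χ) :
    ∃ w, χ = torusCharacter w := by
  classical
  choose w hw using fun i => circle_monoidHom_eq_zpow
    (χ.comp (MonoidHom.mulSingle (fun _ => Circle) i))
    (hχ.comp (continuous_mulSingle (A := fun _ => Circle) i))
  refine ⟨w, MonoidHom.ext fun t => ?_⟩
  calc χ t = χ (∏ i, Pi.mulSingle i (t i)) := by rw [Finset.univ_prod_mulSingle]
    _ = ∏ i, t i ^ w i := by rw [map_prod]; exact Finset.prod_congr rfl fun i _ => hw i (t i)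

theorem torusCharacter_update_const [DecidableEq ι] (b c : ℤ) (i : ι) (t : ι → Circle) :
    torusCharacter (Function.update (fun _ => b) i c) t = (∏ j, t j) ^ b * t i ^ (c - b) := by
  have hweight : Function.update (fun _ => b) i c = (fun _ => b) + Pi.single i (c - b) := by
    ext j
    obtain rfl | hj := eq_or_ne j i <;> simp [*]
  simp only [torusCharacter_apply, hweight, Pi.add_apply, _root_.zpow_add, Finset.prod_mul_distrib,
    Finset.prod_zpow]
  congr 1
  simp [Pi.single_apply]

theorem range_eq_of_sum_linearIndependent_eq {R V α κ : Type*} [Semiring R] [CharZero R]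
    [AddCommMonoid V] [Module R V] [Fintype κ] {f : α → V} (hf : LinearIndependent R f)
    {v w : κ → α} (h : ∑ j, f (v j) = ∑ j, f (w j)) : Set.range v = Set.range w := by
  classical
  have hcoeff : ∑ j, Finsupp.single (v j) (1 : R) = ∑ j, Finsupp.single (w j) (1 : R) :=
    hf (by simpa using h)
  have hcard (a : α) : Finset.card {j | v j = a} = Finset.card {j | w j = a} := by
    simpa [Finsupp.finsetSum_apply, Finsupp.single_apply] using DFunLike.congr_fun hcoeff a
  ext a
  simpa [Finset.filter_eq_empty_iff] using congrArg (· ≠ 0) (hcard a)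

theorem linearIndependent_torusCharacter :
    LinearIndependent ℂ fun (w : ι → ℤ) (t : ι → Circle) => (torusCharacter w t : ℂ) := by
  refine (linearIndependent_monoidHom (ι → Circle) ℂ).comp
    (fun w => Circle.coeHom.comp (torusCharacter w)) fun v w hvw => torusCharacter_injective ?_
  ext t
  exact DFunLike.congr_fun hvw t

end TorusCharacters

section SimultaneousDiagonalization

open Matrix Module.End ComplexStarModule

theorem exists_orthonormalBasis_eigenvectors_of_pairwise_commute {𝕜 E ι κ : Type*} [RCLike 𝕜]
    [NormedAddCommGroup E] [InnerProductSpace 𝕜 E] [FiniteDimensional 𝕜 E] [Fintype κ]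
    {T : ι → E →ₗ[𝕜] E} (hT : ∀ i, (T i).IsSymmetric) (hcomm : Pairwise (Function.onFun Commute T))
    (hκ : Module.finrank 𝕜 E = Fintype.card κ) :
    ∃ (b : OrthonormalBasis κ 𝕜 E) (c : ι → κ → 𝕜), ∀ i j, T i (b j) = c i j • b j := by
  classical
  let V (α : ι → 𝕜) : Submodule 𝕜 E := ⨅ i, eigenspace (T i) (α i)
  have hV : DirectSum.IsInternal V :=
    LinearMap.IsSymmetric.directSum_isInternal_of_pairwise_commute hT hcomm
  have hVorth : OrthogonalFamily 𝕜 (fun α : {α // V α ≠ ⊥} => V α) fun α => (V α).subtypeₗᵢ :=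
    (LinearMap.IsSymmetric.orthogonalFamily_iInf_eigenspaces hT).comp Subtype.val_injective
  have hVne := DirectSum.isInternal_ne_bot_iff.mpr hV
  have : Finite {α // V α ≠ ⊥} :=
    (WellFoundedGT.finite_ne_bot_of_iSupIndep hV.submodule_iSupIndep).to_subtype
  have := Fintype.ofFinite {α // V α ≠ ⊥}
  let e := Fintype.equivFin κ
  refine ⟨(hVne.subordinateOrthonormalBasis hκ hVorth).reindex e.symm,
    fun i j => (hVne.subordinateOrthonormalBasisIndex hκ (e j) hVorth).1 i, fun i j => ?_⟩
  have hmem := hVne.subordinateOrthonormalBasis_subordinate hκ (e j) hVorth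
  rw [OrthonormalBasis.reindex_apply, Equiv.symm_symm]
  exact mem_eigenspace_iff.mp ((Submodule.mem_iInf _).mp hmem i)

variable {n ι : Type*} [Fintype n] [DecidableEq n]

theorem exists_unitary_conj_diagonal_of_isHermitian {𝕜 : Type*} [RCLike 𝕜]
    {A : ι → Matrix n n 𝕜} (hA : ∀ i, (A i).IsHermitian)
    (hcomm : ∀ i j, Commute (A i) (A j)) :
    ∃ (g : unitaryGroup n 𝕜) (c : ι → n → 𝕜), ∀ i, star g.1 * A i * g = diagonal (c i) := by
  have hcomm' : Pairwise (Function.onFun Commute fun i => toEuclideanLin (A i)) := fun i j _ =>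
    LinearMap.ext fun v => by simp [Module.End.mul_apply, toLpLin_apply, (hcomm i j).eq]
  obtain ⟨b, c, hbc⟩ := exists_orthonormalBasis_eigenvectors_of_pairwise_commute (κ := n)
    (fun i => isSymmetric_toEuclideanLin_iff.mpr (hA i)) hcomm' (by simp)
  let g : unitaryGroup n 𝕜 := ⟨(EuclideanSpace.basisFun n 𝕜).toBasis.toMatrix b,
    (EuclideanSpace.basisFun n 𝕜).toMatrix_orthonormalBasis_mem_unitary b⟩
  refine ⟨g, c, fun i => ?_⟩
  have hAg : A i * g = g * diagonal (c i) := by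
    ext k j
    rw [Matrix.mul_apply, mul_diagonal, mul_comm]
    simpa [toLpLin_apply, mulVec, dotProduct, g, Module.Basis.toMatrix_apply]
      using congrArg (fun v => v.ofLp k) (hbc i j)
  rw [mul_assoc, hAg, ← mul_assoc, mem_unitaryGroup_iff'.mp g.2, one_mul]

/-- The maximal torus of diagonal matrices of the unitary group, parametrized by the diagonal. -/
noncomputable def diagonalUnitary : (n → Circle) →* unitaryGroup n ℂ where
  toFun t := ⟨diagonal fun j => t j, by
    simp [mem_unitaryGroup_iff, star_eq_conjTranspose, Complex.mul_conj]⟩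
  map_one' := Subtype.ext diagonal_one
  map_mul' s t := Subtype.ext (diagonal_mul_diagonal _ _).symm

@[simp]
theorem coe_diagonalUnitary (t : n → Circle) :
    (diagonalUnitary t : Matrix n n ℂ) = diagonal fun j => (t j : ℂ) :=
  rfl

theorem continuous_diagonalUnitary : Continuous (diagonalUnitary (n := n)) :=
  Continuous.subtype_mk (by fun_prop) _

theorem diagonalUnitary_injective : Function.Injective (diagonalUnitary (n := n)) := fun _ _ hst =>
  funext fun j => Subtype.ext (congrFun (diagonal_injective (congrArg Subtype.val hst)) j)

theorem exists_diagonalUnitary_eq {v : unitaryGroup n ℂ} {c : n → ℂ}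
    (hv : (v : Matrix n n ℂ) = diagonal c) : ∃ t, v = diagonalUnitary t := by
  have hc (j : n) : c j ∈ Submonoid.unitSphere ℂ := by
    have hdiag := mem_unitaryGroup_iff'.mp v.2
    rw [hv, star_eq_conjTranspose, diagonal_conjTranspose, diagonal_mul_diagonal] at hdiag
    have hnorm : star (c j) * c j = 1 := by simpa using congrFun (congrFun hdiag j) j
    exact mem_sphere_zero_iff_norm.mpr
      (CStarRing.norm_of_mem_unitary ⟨hnorm, mul_comm (c j) _ ▸ hnorm⟩)
  exact ⟨fun j => ⟨c j, hc j⟩, Subtype.ext hv⟩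

theorem commute_realPart {A : Type*} [Ring A] [Algebra ℂ A] [StarRing A] [StarModule ℂ A] {a b : A}
    (h : Commute a b) (hstar : Commute (star a) b) : Commute (ℜ a : A) b := by
  rw [realPart_apply_coe]
  exact (h.add_left hstar).smul_left _

theorem commute_imaginaryPart {A : Type*} [Ring A] [Algebra ℂ A] [StarRing A] [StarModule ℂ A]
    {a b : A} (h : Commute a b) (hstar : Commute (star a) b) : Commute (ℑ a : A) b := by
  rw [imaginaryPart_apply_coe]
  exact ((h.sub_left hstar).smul_left _).smul_left _

theorem exists_conj_diagonalUnitary_of_commute {u : ι → unitaryGroup n ℂ}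
    (hcomm : ∀ i j, Commute (u i) (u j)) :
    ∃ (g : unitaryGroup n ℂ) (t : ι → n → Circle), ∀ i, u i = g * diagonalUnitary (t i) * g⁻¹ := by
  let A : ι ⊕ ι → Matrix n n ℂ :=
    Sum.elim (fun i => ℜ (u i : Matrix n n ℂ)) fun i => ℑ (u i : Matrix n n ℂ)
  have hA (i) : (A i).IsHermitian := by rcases i with i | i <;> exact Subtype.prop _
  have hu (i j) : Commute (u i : Matrix n n ℂ) (u j) := congrArg Subtype.val (hcomm i j).eq
  have hstaru (i j) : Commute (star (u i : Matrix n n ℂ)) (u j) :=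
    congrArg Subtype.val (hcomm i j).inv_left.eq
  have hAu (i j) : Commute (A i) (u j) := by
    rcases i with i | i
    · exact commute_realPart (hu i j) (hstaru i j)
    · exact commute_imaginaryPart (hu i j) (hstaru i j)
  have hstarA (i j) : Commute (star (u j : Matrix n n ℂ)) (A i) :=
    (hA i).eq ▸ commute_star_star.mpr (hAu i j).symm
  have hAA (i j) : Commute (A i) (A j) := by
    rcases j with j | j
    · exact (commute_realPart (hAu i j).symm (hstarA i j)).symm
    · exact (commute_imaginaryPart (hAu i j).symm (hstarA i j)).symm
  obtain ⟨g, c, hgc⟩ := exists_unitary_conj_diagonal_of_isHermitian hA hAA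
  have hconj (i : ι) : ((g⁻¹ * u i * g : unitaryGroup n ℂ) : Matrix n n ℂ) =
      diagonal (c (.inl i) + Complex.I • c (.inr i)) := by
    calc star g.1 * u i * g
      _ = star g.1 * (A (.inl i) + Complex.I • A (.inr i)) * g := by
        rw [show A (.inl i) + Complex.I • A (.inr i) = u i from
          realPart_add_I_smul_imaginaryPart (u i : Matrix n n ℂ)]
      _ = diagonal (c (.inl i) + Complex.I • c (.inr i)) := by
        rw [mul_add, add_mul, mul_smul_comm, smul_mul_assoc, hgc, hgc, ← diagonal_smul,
          diagonal_add]
        rfl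
  choose t ht using fun i => exists_diagonalUnitary_eq (hconj i)
  refine ⟨g, t, fun i => ?_⟩
  rw [← ht]
  group

end SimultaneousDiagonalization

section PermutationInvariant

open Finset Equiv

variable {ι α : Type*} [Fintype ι] {S : Finset (ι → α)} {v : ι → α}

theorem card_levelSet_mul_card_compl_le [DecidableEq α] (hS : ∀ v ∈ S, ∀ σ : Perm ι, v ∘ σ ∈ S)
    (hv : v ∈ S) (c : α) :
    #{i | v i = c} * #{i | v i ≠ c} ≤ #{w ∈ S | ∃ i, v i = c ∧ w i ≠ c} := by
  classical
  rw [← card_product]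
  refine card_le_card_of_injOn (fun p => v ∘ swap p.1 p.2) ?_ ?_
  · rintro ⟨i, j⟩ hp
    have hij : v i = c ∧ v j ≠ c := by simpa using hp
    simpa using ⟨hS v hv _, i, hij.1, by simpa using hij.2⟩
  · rintro ⟨i, j⟩ hp ⟨k, l⟩ hq h
    have hij : v i = c ∧ v j ≠ c := by simpa using hp
    have hkl : v k = c ∧ v l ≠ c := by simpa using hq
    have hi := congrFun h i
    have hj := congrFun h j
    simp only [Function.comp_apply, swap_apply_left, swap_apply_right, swap_apply_def] at hi hj
    grind

theorem eq_one_or_of_mul_add_le_add {a b f : ℕ} (ha : 0 < a) (hb : 0 < b) (hf : 0 < f)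
    (h : a * b + f ≤ a + b) : b = 1 ∨ a = 1 ∧ f ≤ 1 := by
  obtain rfl | hb1 := eq_or_ne b 1
  · exact .inl rfl
  obtain rfl | ha1 := eq_or_ne a 1
  · exact .inr ⟨rfl, by lia⟩
  have : a + b ≤ a * b := Nat.add_le_mul (by lia) (by lia)
  lia

theorem exists_const_off_of_card_le (hS : ∀ v ∈ S, ∀ σ : Perm ι, v ∘ σ ∈ S)
    (hcard : #S ≤ Fintype.card ι) (hv : v ∈ S) (hne : ∃ i j, v i ≠ v j) :
    ∃ i, ∀ j k, j ≠ i → k ≠ i → v j = v k := by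
  classical
  obtain ⟨i₀, j₀, hij⟩ := hne
  let A : Finset ι := {i | v i = v i₀}
  let B : Finset ι := {i | v i ≠ v i₀}
  let F : Finset (ι → α) := {w ∈ S | ¬ ∃ i, v i = v i₀ ∧ w i ≠ v i₀}
  have hAB : #A * #B + #F ≤ #A + #B := calc
    #A * #B + #F ≤ #S := by
      rw [← card_filter_add_card_filter_not (s := S)
        fun w : ι → α => ∃ i, v i = v i₀ ∧ w i ≠ v i₀]
      exact Nat.add_le_add_right (card_levelSet_mul_card_compl_le hS hv _) _
    _ ≤ #A + #B := by rwa [card_filter_add_card_filter_not, card_univ]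
  have hA : 0 < #A := card_pos.mpr ⟨i₀, by simp [A]⟩
  have hB : 0 < #B := card_pos.mpr ⟨j₀, by simpa [B] using hij.symm⟩
  have hvF : v ∈ F := by simp +contextual [F, hv]
  have hF : 0 < #F := card_pos.mpr ⟨v, hvF⟩
  obtain hB1 | ⟨hA1, hF1⟩ := eq_one_or_of_mul_add_le_add hA hB hF hAB
  · obtain ⟨i, hi⟩ := card_eq_one.mp hB1
    have hconst (j) (hj : j ≠ i) : v j = v i₀ := by
      by_contra hvj
      exact hj (mem_singleton.mp (hi ▸ (mem_filter.mpr ⟨mem_univ j, hvj⟩ : j ∈ B)))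
    exact ⟨i, fun j k hj hk => (hconst j hj).trans (hconst k hk).symm⟩
  · obtain ⟨i, hi⟩ := card_eq_one.mp hA1
    refine ⟨i, fun j k hj hk => ?_⟩
    have hAi (l) (hl : v l = v i₀) : l = i :=
      mem_singleton.mp (hi ▸ (mem_filter.mpr ⟨mem_univ l, hl⟩ : l ∈ A))
    have hswapF : v ∘ swap j k ∈ F := by
      simp only [F, mem_filter, not_exists, not_and, not_not]
      refine ⟨hS v hv _, fun l hl => ?_⟩
      rw [Function.comp_apply, hAi l hl, swap_apply_of_ne_of_ne hj.symm hk.symm, ← hAi l hl, hl]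
    simpa using congrFun (card_le_one.mp hF1 v hvF _ hswapF) j

omit [Fintype ι] in
theorem update_const_injective [DecidableEq ι] {b c : α} (hbc : b ≠ c) :
    Function.Injective fun i : ι => Function.update (fun _ => b) i c :=
  fun i j hij => by simpa [Function.update_apply, hbc.symm] using congrFun hij i

theorem exists_eq_image_update_const [DecidableEq ι] [DecidableEq α]
    (hS : ∀ v ∈ S, ∀ σ : Perm ι, v ∘ σ ∈ S)
    (hcard : #S ≤ Fintype.card ι) (hv : v ∈ S) (hne : ∃ i j, v i ≠ v j) :
    ∃ b c, b ≠ c ∧ S = univ.image fun i => Function.update (fun _ => b) i c := by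
  obtain ⟨i, hi⟩ := exists_const_off_of_card_le hS hcard hv hne
  obtain ⟨j, hji, hvj⟩ : ∃ j, j ≠ i ∧ v j ≠ v i := by
    by_contra! h
    obtain ⟨k, l, hkl⟩ := hne
    have hconst (m) : v m = v i := if hm : m = i then hm ▸ rfl else h m hm
    exact hkl ((hconst k).trans (hconst l).symm)
  have hswap (l : ι) : Function.update (fun _ => v j) l (v i) = v ∘ swap i l := by
    ext k
    simp only [Function.update_apply, Function.comp_apply, swap_apply_def]
    grind
  refine ⟨v j, v i, hvj, (eq_of_subset_of_card_le ?_ ?_).symm⟩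
  · simp only [image_subset_iff, mem_univ, forall_const, hswap]
    exact fun l => hS v hv _
  · rwa [card_image_of_injective _ (update_const_injective hvj)]

end PermutationInvariant

section Weights

open Matrix

variable {ι n : Type*} [Fintype ι] [Fintype n] [DecidableEq n]

theorem trace_unitary_conj (g x : unitaryGroup n ℂ) :
    trace (g * x * g⁻¹ : unitaryGroup n ℂ).1 = trace x.1 := by
  rw [UnitaryGroup.mul_val, trace_mul_comm, ← UnitaryGroup.mul_val, inv_mul_cancel_left]

theorem exists_torusWeights (ρ : (ι → Circle) →* unitaryGroup n ℂ) (hρ : Continuous ρ) :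
    ∃ (g : unitaryGroup n ℂ) (w : n → ι → ℤ),
      ∀ t, ρ t = g * diagonalUnitary (fun j => torusCharacter (w j) t) * g⁻¹ := by
  obtain ⟨g, χ, hχ⟩ := exists_conj_diagonalUnitary_of_commute fun s t =>
    (Commute.all s t).map ρ
  have hρχ (t : ι → Circle) : diagonalUnitary (χ t) = g⁻¹ * ρ t * g := by
    rw [hχ]
    group
  have hmul (s t) : χ (s * t) = χ s * χ t := diagonalUnitary_injective <| by
    rw [map_mul, hρχ, hρχ, hρχ, map_mul]
    group
  have hcont (j : n) : Continuous fun t => χ t j := by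
    have hentry : (fun t => (χ t j : ℂ)) = fun t => (g⁻¹ * ρ t * g).1 j j := by
      simp [← hρχ]
    have : Continuous fun t => (g⁻¹ * ρ t * g).1 := by fun_prop
    refine Continuous.subtype_mk (hentry ▸ ?_) _
    fun_prop
  choose w hw using fun j => exists_eq_torusCharacter
    (MonoidHom.mk' (fun t => χ t j) fun s t => congrFun (hmul s t) j) (hcont j)
  refine ⟨g, w, fun t => ?_⟩
  simp only [← hw]
  exact hχ t

end Weights

section Permutations

open Matrix

variable {n : Type*} [Fintype n] [DecidableEq n]

/-- The permutation matrices as a subgroup of the unitary group, with `permUnitary σ` sending the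
`i`-th basis vector to the `σ i`-th. -/
noncomputable def permUnitary : Equiv.Perm n →* unitaryGroup n ℂ :=
  permMatrixHom.codRestrict _ fun σ => by
    rw [mem_unitaryGroup_iff, star_eq_conjTranspose, permMatrixHom_apply, conjTranspose_permMatrix,
      ← permMatrix_mul, inv_mul_cancel, permMatrix_one]

theorem inv_permUnitary_mul_diagonalUnitary_mul (σ : Equiv.Perm n) (t : n → Circle) :
    (permUnitary σ)⁻¹ * diagonalUnitary t * permUnitary σ = diagonalUnitary (t ∘ σ) := by
  rw [mul_assoc, inv_mul_eq_iff_eq_mul]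
  ext i j
  have hentry : permMatrixHom (R := ℂ) σ i j = if i = σ j then 1 else 0 := by
    simp [PEquiv.toMatrix_apply, Equiv.Perm.inv_def, Equiv.eq_symm_apply, eq_comm]
  change (diagonal (fun j => (t j : ℂ)) * (permMatrixHom σ : Matrix n n ℂ)) i j =
    ((permMatrixHom σ : Matrix n n ℂ) * diagonal fun j => (t (σ j) : ℂ)) i j
  rw [mul_diagonal, diagonal_mul, hentry]
  split_ifs with h <;> simp [h]

end Permutations

section Rigidity

open Matrix

variable {n m : Type*} [Fintype n] [DecidableEq n] [Fintype m] [DecidableEq m]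

theorem exists_perm_eq_comp_of_range_eq {α β : Type*} [Finite α] {f e : α → β}
    (he : Function.Injective e) (hfe : Set.range f = Set.range e) :
    ∃ σ : Equiv.Perm α, f = e ∘ σ := by
  choose σ hσ using fun a => hfe ▸ Set.mem_range_self (f := f) a
  have hσ_surj : Function.Surjective σ := fun a => by
    obtain ⟨a', ha'⟩ := hfe.symm ▸ Set.mem_range_self (f := e) a
    exact ⟨a', he ((hσ a').trans ha')⟩
  exact ⟨.ofBijective σ (Finite.surjective_iff_bijective.mp hσ_surj), funext fun a => (hσ a).symm⟩

variable {β : unitaryGroup n ℂ →* unitaryGroup n ℂ}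

theorem trace_map_comp_perm (σ : Equiv.Perm n) (t : n → Circle) :
    trace (β (diagonalUnitary (t ∘ σ))).1 = trace (β (diagonalUnitary t)).1 := by
  rw [← inv_permUnitary_mul_diagonalUnitary_mul, map_mul, map_mul, map_inv]
  simpa using trace_unitary_conj (β (permUnitary σ))⁻¹ (β (diagonalUnitary t))

theorem comp_perm_mem_range_torusWeights {w : n → n → ℤ}
    (hw : ∀ t, trace (β (diagonalUnitary t)).1 = ∑ j, (torusCharacter (w j) t : ℂ))
    {v : n → ℤ} (hv : v ∈ Set.range w) (σ : Equiv.Perm n) :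
    v ∘ σ ∈ Set.range w := by
  have hrange : Set.range (fun j => w j ∘ σ) = Set.range w := by
    refine range_eq_of_sum_linearIndependent_eq linearIndependent_torusCharacter ?_
    funext t
    simp only [Finset.sum_apply]
    rw [← hw, ← trace_map_comp_perm σ.symm, hw]
    simp [torusCharacter_comp_perm]
  obtain ⟨j, rfl⟩ := hv
  exact hrange ▸ ⟨j, rfl⟩

omit [DecidableEq n] in
theorem exists_torusWeight_ne {ρ : (n → Circle) → unitaryGroup m ℂ} (hρ : Function.Injective ρ)
    {g : unitaryGroup m ℂ} {w : m → n → ℤ}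
    (hgw : ∀ t, ρ t = g * diagonalUnitary (fun k => torusCharacter (w k) t) * g⁻¹)
    {i j : n} (hij : i ≠ j) : ∃ k, w k i ≠ w k j := by
  classical
  by_contra! hw
  let z := Circle.exp Real.pi
  let t : n → Circle := Pi.mulSingle i z * (Pi.mulSingle j z)⁻¹
  have hchar (k) : torusCharacter (w k) t = torusCharacter (w k) 1 := by
    simp only [t, map_mul, map_inv, torusCharacter_mulSingle, hw k, mul_inv_cancel, map_one]
  have ht : t = 1 := hρ (by simp only [hgw, hchar])
  exact Circle.exp_pi_ne_one (by simpa [t, hij] using congrFun ht i)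

theorem exists_conj_map_diagonalUnitary [Nontrivial n] (hβ : Continuous β)
    (hinj : Function.Injective β) :
    ∃ (g : unitaryGroup n ℂ) (b d : ℤ), ∀ t, β (diagonalUnitary t) =
      g * diagonalUnitary (fun i => (∏ j, t j) ^ b * t i ^ d) * g⁻¹ := by
  obtain ⟨g, w, hgw⟩ := exists_torusWeights (β.comp diagonalUnitary)
    (hβ.comp continuous_diagonalUnitary)
  simp only [MonoidHom.comp_apply] at hgw
  have htrace (t) : trace (β (diagonalUnitary t)).1 = ∑ j, (torusCharacter (w j) t : ℂ) := by
    rw [hgw, trace_unitary_conj, coe_diagonalUnitary, trace_diagonal]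
  obtain ⟨i, j, hij⟩ := exists_pair_ne n
  obtain ⟨k, hk⟩ := exists_torusWeight_ne (hinj.comp diagonalUnitary_injective) hgw hij
  obtain ⟨b, c, hbc, hS⟩ := exists_eq_image_update_const (S := Finset.univ.image w)
    (fun v hv σ => by
      simpa using comp_perm_mem_range_torusWeights htrace (by simpa using hv) σ)
    Finset.card_image_le (Finset.mem_image_of_mem w (Finset.mem_univ k)) ⟨i, j, hk⟩
  obtain ⟨σ, rfl⟩ := exists_perm_eq_comp_of_range_eq (update_const_injective hbc)
    (by simpa using congrArg (fun S : Finset (n → ℤ) => (S : Set (n → ℤ))) hS)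
  refine ⟨g * (permUnitary σ)⁻¹, b, c - b, fun t => ?_⟩
  calc β (diagonalUnitary t)
    _ = g * diagonalUnitary ((fun i => (∏ j, t j) ^ b * t i ^ (c - b)) ∘ σ) * g⁻¹ := by
      simp only [hgw, Function.comp_def, torusCharacter_update_const]
    _ = _ := by
      rw [← inv_permUnitary_mul_diagonalUnitary_mul]
      group

theorem conj_diagonalUnitary_const (g : unitaryGroup n ℂ) (z : Circle) :
    g * diagonalUnitary (fun _ => z) * g⁻¹ = diagonalUnitary fun _ => z := by
  rw [mul_inv_eq_iff_eq_mul]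
  ext i j
  simp [mul_comm]

section

variable {g : unitaryGroup n ℂ} {b d : ℤ}
  (hβ : ∀ t, β (diagonalUnitary t) =
    g * diagonalUnitary (fun i => (∏ j, t j) ^ b * t i ^ d) * g⁻¹)

include hβ

theorem isUnit_torusExponent [Nontrivial n] (hinj : Function.Injective β) : IsUnit d := by
  obtain ⟨i, j, hij⟩ := exists_pair_ne n
  refine isUnit_of_circle_zpow_injective fun z z' hz => ?_
  let t (z : Circle) : n → Circle := Pi.mulSingle i z * (Pi.mulSingle j z)⁻¹
  have hprod (z) : ∏ k, t z k = 1 := by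
    simp [t, Finset.prod_mul_distrib]
  have hpow (z k) : t z k ^ d = t (z ^ d) k := by
    simp only [t, Pi.mul_apply, Pi.inv_apply, Pi.mulSingle_apply, mul_zpow]
    split_ifs <;> simp
  have ht : t z = t z' := diagonalUnitary_injective <| hinj <| by
    simp only [hβ, hprod, hpow, show z ^ d = z' ^ d from hz]
  simpa [t, hij] using congrFun ht i

theorem map_diagonalUnitary_const (z : Circle) :
    β (diagonalUnitary fun _ => z) = diagonalUnitary fun _ => z ^ (Fintype.card n * b + d) := by
  rw [hβ]
  simp only [Finset.prod_const, Finset.card_univ, ← zpow_natCast, ← _root_.zpow_mul,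
    ← _root_.zpow_add, conj_diagonalUnitary_const]

theorem isUnit_scalarExponent [Nonempty n] (hinj : Function.Injective β) :
    IsUnit (Fintype.card n * b + d) := by
  refine isUnit_of_circle_zpow_injective fun z z' hz => ?_
  have hconst : (fun _ : n => z) = fun _ => z' := diagonalUnitary_injective <| hinj <| by
    simp only [map_diagonalUnitary_const hβ,
      show z ^ (Fintype.card n * b + d) = z' ^ (Fintype.card n * b + d) from hz]
  exact congrFun hconst (Classical.arbitrary n)

theorem torusExponents_eq_of_map_scalar_eq (hn : 2 < Fintype.card n) (hinj : Function.Injective β)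
    {ω : Circle} (hω : ω⁻¹ ≠ ω)
    (hfix : β (diagonalUnitary fun _ => ω) = diagonalUnitary fun _ => ω) : b = 0 ∧ d = 1 := by
  have : Nontrivial n := Fintype.one_lt_card_iff_nontrivial.mp (by lia)
  have hscalar : (Fintype.card n * b + d : ℤ) = 1 := by
    refine (Int.isUnit_iff.mp (isUnit_scalarExponent hβ hinj)).resolve_right fun hneg => hω ?_
    rw [map_diagonalUnitary_const hβ, hneg, _root_.zpow_neg_one] at hfix
    exact congrFun (diagonalUnitary_injective hfix) (Classical.arbitrary n)
  obtain rfl | rfl := Int.isUnit_iff.mp (isUnit_torusExponent hβ hinj)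
  · have : (Fintype.card n : ℤ) ≠ 0 := by lia
    simpa [this] using hscalar
  · have hdvd : (Fintype.card n : ℤ) ∣ 2 := ⟨b, by linarith⟩
    have := Int.le_of_dvd (by norm_num) hdvd
    lia

end

theorem trace_map_eq_of_map_scalar_eq (hn : 2 < Fintype.card n) (hβ : Continuous β)
    (hinj : Function.Injective β) {ω : Circle} (hω : ω⁻¹ ≠ ω)
    (hfix : β (diagonalUnitary fun _ => ω) = diagonalUnitary fun _ => ω) (x : unitaryGroup n ℂ) :
    trace (β x).1 = trace x.1 := by
  have : Nontrivial n := Fintype.one_lt_card_iff_nontrivial.mp (by lia)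
  obtain ⟨g, b, d, hgbd⟩ := exists_conj_map_diagonalUnitary hβ hinj
  obtain ⟨rfl, rfl⟩ := torusExponents_eq_of_map_scalar_eq hgbd hn hinj hω hfix
  obtain ⟨h, t, ht⟩ :=
    exists_conj_diagonalUnitary_of_commute (u := fun _ : Unit => x) fun _ _ => rfl
  calc trace (β x).1
    _ = trace (β (diagonalUnitary (t ()))).1 := by
      rw [ht (), map_mul, map_mul, map_inv, trace_unitary_conj]
    _ = trace (diagonalUnitary (t ())).1 := by
      rw [hgbd, trace_unitary_conj]
      simp
    _ = trace x.1 := by rw [ht (), trace_unitary_conj]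

end Rigidity

section TracePreserving

open Matrix

variable {n : Type*} [Fintype n] [DecidableEq n]

theorem ker_eq_of_trace_eq {R A : Type*} [CommRing R] [Ring A] [Algebra R A]
    {F G : A →ₐ[R] Matrix n n R} (hF : Function.Surjective F) (hG : Function.Surjective G)
    (htrace : ∀ a, trace (F a) = trace (G a)) : RingHom.ker F = RingHom.ker G := by
  have hker (F : A →ₐ[R] Matrix n n R) (hF : Function.Surjective F) (a : A) :
      a ∈ RingHom.ker F ↔ ∀ b, trace (F (a * b)) = 0 := by
    rw [RingHom.mem_ker, ext_iff_trace_mul_right, hF.forall]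
    simp
  ext a
  simp only [hker F hF, hker G hG, htrace]

theorem exists_algEquiv_comp_eq_of_trace_eq {R A : Type*} [CommRing R] [Ring A] [Algebra R A]
    {F G : A →ₐ[R] Matrix n n R} (hF : Function.Surjective F) (hG : Function.Surjective G)
    (htrace : ∀ a, trace (F a) = trace (G a)) :
    ∃ e : Matrix n n R ≃ₐ[R] Matrix n n R, ∀ a, e (F a) = G a := by
  refine ⟨(Ideal.quotientKerAlgEquivOfSurjective hF).symm.trans <|
    (Ideal.quotientEquivAlgOfEq R (ker_eq_of_trace_eq hF hG htrace)).trans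
      (Ideal.quotientKerAlgEquivOfSurjective hG), fun a => ?_⟩
  have ha : (Ideal.quotientKerAlgEquivOfSurjective hF).symm (F a) =
      Ideal.Quotient.mk (RingHom.ker F) a :=
    (AlgEquiv.symm_apply_eq _).mpr rfl
  simp only [AlgEquiv.trans_apply, ha]
  rfl

open scoped Matrix.Norms.L2Operator in
theorem span_unitaryGroup :
    Submodule.span ℂ (unitaryGroup n ℂ : Set (Matrix n n ℂ)) = ⊤ :=
  CStarAlgebra.span_unitary (Matrix n n ℂ)

theorem lift_monoidAlgebra_surjective {G : Type*} [Monoid G] {ρ : G →* unitaryGroup n ℂ}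
    (hρ : Function.Surjective ρ) :
    Function.Surjective (MonoidAlgebra.lift ℂ (Matrix n n ℂ) G ((Submonoid.subtype _).comp ρ)) := by
  rw [← AlgHom.coe_toLinearMap, ← LinearMap.range_eq_top, eq_top_iff, ← span_unitaryGroup,
    Submodule.span_le]
  intro x hx
  obtain ⟨a, ha⟩ := hρ ⟨x, hx⟩
  exact ⟨MonoidAlgebra.of ℂ G a, by simp [ha]⟩

theorem exists_algEquiv_of_trace_map_eq {β : unitaryGroup n ℂ →* unitaryGroup n ℂ}
    (hβ : Function.Surjective β) (htrace : ∀ x, trace (β x).1 = trace x.1) :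
    ∃ e : Matrix n n ℂ ≃ₐ[ℂ] Matrix n n ℂ, ∀ x : unitaryGroup n ℂ, e x = β x := by
  let U := unitaryGroup n ℂ
  let F := MonoidAlgebra.lift ℂ (Matrix n n ℂ) U (U.subtype.comp (.id U))
  let G := MonoidAlgebra.lift ℂ (Matrix n n ℂ) U (U.subtype.comp β)
  have hFG : (traceLinearMap n ℂ ℂ) ∘ₗ F.toLinearMap = (traceLinearMap n ℂ ℂ) ∘ₗ G.toLinearMap :=
    MonoidAlgebra.lhom_ext' fun x => LinearMap.ext_ring (by simp [F, G, U, htrace])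
  obtain ⟨e, he⟩ := exists_algEquiv_comp_eq_of_trace_eq (F := F) (G := G)
    (lift_monoidAlgebra_surjective (ρ := .id U) Function.surjective_id)
    (lift_monoidAlgebra_surjective hβ) (LinearMap.congr_fun hFG)
  exact ⟨e, fun x => by simpa [F, G, U] using he (MonoidAlgebra.of ℂ U x)⟩

theorem exists_starAlgEquiv_of_trace_map_eq {β : unitaryGroup n ℂ →* unitaryGroup n ℂ}
    (hβ : Function.Surjective β) (htrace : ∀ x, trace (β x).1 = trace x.1) :
    ∃ e : Matrix n n ℂ ≃⋆ₐ[ℂ] Matrix n n ℂ, ∀ x : unitaryGroup n ℂ, e x = β x := by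
  obtain ⟨e, he⟩ := exists_algEquiv_of_trace_map_eq hβ htrace
  refine ⟨.ofAlgEquiv e fun M => ?_, he⟩
  induction (span_unitaryGroup (n := n) ▸ Submodule.mem_top : M ∈ Submodule.span ℂ _)
    using Submodule.span_induction with
  | mem x hx =>
    lift x to unitaryGroup n ℂ using hx
    simpa [he, -UnitaryGroup.inv_apply, map_inv] using he x⁻¹
  | zero => simp
  | add x y _ _ hx hy => simp only [star_add, map_add, hx, hy]
  | smul c x _ hx => simp only [star_smul, map_smul, hx]

theorem exists_eq_conjStarAlgAut {𝕜 : Type*} [RCLike 𝕜]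
    (e : Matrix n n 𝕜 ≃⋆ₐ[𝕜] Matrix n n 𝕜) : ∃ g, e = Unitary.conjStarAlgAut 𝕜 _ g := by
  let τ := toEuclideanCLM (n := n) (𝕜 := 𝕜)
  let f := τ.symm.trans (e.trans τ)
  obtain ⟨U, hU⟩ := f.eq_linearIsometryEquivConjStarAlgEquiv
    (LinearMap.continuous_of_finiteDimensional f.toAlgEquiv.toLinearMap)
  rw [← Unitary.conjStarAlgAut_symm_unitaryLinearIsometryEquiv] at hU
  let u := Unitary.linearIsometryEquiv.symm U
  refine ⟨⟨τ.symm u.1, Unitary.map_mem τ.symm u.2⟩, StarAlgEquiv.ext fun M => τ.injective ?_⟩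
  have hτ (M) : τ (e M) = u.1 * τ M * star u.1 := by
    simpa [f, u] using DFunLike.congr_fun hU (τ M)
  change τ (e M) = τ (τ.symm u.1 * M * star (τ.symm u.1))
  rw [hτ, map_mul, map_mul, map_star, StarAlgEquiv.apply_symm_apply]

theorem exists_eq_conj_of_trace_map_eq {β : unitaryGroup n ℂ →* unitaryGroup n ℂ}
    (hβ : Function.Surjective β) (htrace : ∀ x, trace (β x).1 = trace x.1) :
    ∃ g, ∀ x, β x = g * x * g⁻¹ := by
  obtain ⟨e, he⟩ := exists_starAlgEquiv_of_trace_map_eq hβ htrace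
  obtain ⟨g, rfl⟩ := exists_eq_conjStarAlgAut e
  exact ⟨g, fun x => Subtype.ext (he x).symm⟩

end TracePreserving

section SemidirectProducts

open SemidirectProduct
open scoped commutatorElement

theorem commutatorElement_mul_mul {G : Type*} [Group G] {u v c d : G} (huc : Commute u c)
    (hud : Commute u d) (hvc : Commute v c) (hvd : Commute v d) :
    ⁅u * c, v * d⁆ = ⁅u, v⁆ * ⁅c, d⁆ := by
  have huv : Commute (u⁻¹ * v⁻¹) ⁅c, d⁆ := by
    have hc := huc.inv_left.mul_left hvc.inv_left
    have hd := hud.inv_left.mul_left hvd.inv_left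
    exact ((hc.mul_right hd).mul_right hc.inv_right).mul_right hd.inv_right
  calc ⁅u * c, v * d⁆
    _ = u * (c * v) * d * c⁻¹ * (u⁻¹ * d⁻¹) * v⁻¹ := by
      rw [commutatorElement_def]
      group
    _ = u * v * (⁅c, d⁆ * (u⁻¹ * v⁻¹)) := by
      rw [← hvc.eq, hud.inv_inv.eq, commutatorElement_def]
      group
    _ = ⁅u, v⁆ * ⁅c, d⁆ := by
      rw [← huv.eq, commutatorElement_def u]
      group

variable {G Γ : Type*} [Group G] [Group Γ] {φ : Γ →* MulAut G}

theorem commute_inl_inl_mul_inr {s : Γ} {y : G} (hs : φ s = MulAut.conj y) (u : G) :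
    Commute (inl u : G ⋊[φ] Γ) (inl y⁻¹ * inr s) := by
  have hy : φ s u = y * u * y⁻¹ := by rw [hs, MulAut.conj_apply]
  rw [commute_iff_eq]
  ext <;> simp [hy, mul_assoc]

theorem commutatorElement_mul_eq_of_commute {s t : Γ} (hst : Commute s t) {y z : G}
    (hs : φ s = MulAut.conj y) (ht : φ t = MulAut.conj z) {a b : G}
    (hab : Commute (inl a * inr s : G ⋊[φ] Γ) (inl b * inr t)) : ⁅a * y, b * z⁆ = ⁅y, z⁆ := by
  let c : G ⋊[φ] Γ := inl y⁻¹ * inr s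
  let d : G ⋊[φ] Γ := inl z⁻¹ * inr t
  have hsplit (u v : G) : ⁅inl u * c, inl v * d⁆ = inl ⁅u, v⁆ * ⁅c, d⁆ := by
    rw [commutatorElement_mul_mul (commute_inl_inl_mul_inr hs u) (commute_inl_inl_mul_inr ht u)
      (commute_inl_inl_mul_inr hs v) (commute_inl_inl_mul_inr ht v), map_commutatorElement]
  have hS (u) : inl (u * y) * c = inl u * inr s := by simp [c, ← mul_assoc]
  have hT (u) : inl (u * z) * d = inl u * inr t := by simp [d, ← mul_assoc]
  have hab' : inl ⁅a * y, b * z⁆ * ⁅c, d⁆ = 1 := by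
    rw [← hsplit, hS, hT, commutatorElement_eq_one_iff_commute]
    exact hab
  have hst' : inl ⁅y, z⁆ * ⁅c, d⁆ = 1 := by
    rw [← hsplit, ← one_mul y, ← one_mul z, hS, hT, commutatorElement_eq_one_iff_commute]
    simpa using hst.map inr
  exact inl_injective (mul_right_cancel (hab'.trans hst'.symm))

section Extension

variable {ψ : G ⋊[φ] Γ →* G ⋊[φ] Γ} {β : G →* G}

theorem conj_left_mul_apply_right (hψ : ∀ x, ψ (inl x) = inl (β x)) (s : Γ) (x : G) :
    β (φ s x) = (ψ (inr s)).left * φ (ψ (inr s)).right (β x) * (ψ (inr s)).left⁻¹ := by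
  have h : ψ (inr s) * inl (β x) = inl (β (φ s x)) * ψ (inr s) := by
    rw [← hψ, ← hψ, inl_aut, ← map_mul, ← map_mul]
    simp
  have hleft := congrArg SemidirectProduct.left h
  simp only [mul_left, left_inl, right_inl, map_one, MulAut.one_apply] at hleft
  rw [hleft, mul_inv_cancel_right]

theorem conj_left_mul_eq_conj_map (hψ : ∀ x, ψ (inl x) = inl (β x)) (hβ : Function.Surjective β)
    {s : Γ} {y : G} (hs : φ s = MulAut.conj y) (hs' : φ (ψ (inr s)).right = φ s) :
    MulAut.conj ((ψ (inr s)).left * y) = MulAut.conj (β y) := by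
  ext x
  obtain ⟨x, rfl⟩ := hβ x
  have h := conj_left_mul_apply_right hψ s x
  rw [hs', hs] at h
  simp only [MulAut.conj_apply, map_mul, map_inv, MulAut.mul_apply] at h ⊢
  rw [h]
  group

theorem commutatorElement_eq_of_conj_eq {a a' b b' : G} (ha : MulAut.conj a = MulAut.conj a')
    (hb : MulAut.conj b = MulAut.conj b') : ⁅a, b⁆ = ⁅a', b'⁆ := by
  have ha' (x) : a * x * a⁻¹ = a' * x * a'⁻¹ := DFunLike.congr_fun ha x
  have hb' (x) : b * x * b⁻¹ = b' * x * b'⁻¹ := DFunLike.congr_fun hb x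
  calc ⁅a, b⁆ = a' * (b * a'⁻¹ * b⁻¹) := by rw [commutatorElement_def, ha']; group
    _ = ⁅a', b'⁆ := by rw [commutatorElement_def, hb']; group

theorem map_commutatorElement_eq_of_extends (hψ : ∀ x, ψ (inl x) = inl (β x))
    (hβ : Function.Surjective β) {s t : Γ} (hst : Commute s t) {y z : G}
    (hs : φ s = MulAut.conj y) (ht : φ t = MulAut.conj z)
    (hs' : φ (ψ (inr s)).right = φ s) (ht' : φ (ψ (inr t)).right = φ t) : β ⁅y, z⁆ = ⁅y, z⁆ := by
  rw [map_commutatorElement, ← commutatorElement_eq_of_conj_eq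
    (conj_left_mul_eq_conj_map hψ hβ hs hs') (conj_left_mul_eq_conj_map hψ hβ ht ht')]
  refine commutatorElement_mul_eq_of_commute (φ := φ) (s := (ψ (inr s)).right)
    (t := (ψ (inr t)).right) ?_ (hs'.trans hs) (ht'.trans ht) ?_
  · exact (hst.map inr).map (rightHom.comp ψ)
  · simpa only [inl_left_mul_inr_right] using (hst.map inr).map ψ

theorem injective_right_of_extends (hinj : Function.Injective ψ)
    (hψ : ∀ x, ψ (inl x) = inl (β x)) (hβ : Function.Surjective β) :
    Function.Injective ((rightHom.comp ψ).comp inr) := by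
  rw [injective_iff_map_eq_one]
  intro γ hγ
  obtain ⟨x, hx⟩ := hβ (ψ (inr γ)).left
  have hγx : ψ (inr γ) = ψ (inl x) := by
    rw [hψ, hx, ← inl_left_mul_inr_right (ψ (inr γ)),
      show (ψ (inr γ)).right = 1 from hγ]
    simp
  simpa using congrArg SemidirectProduct.right (hinj hγx)

end Extension

theorem right_map_eq_right {N H : Type*} [CommGroup N] [IsCyclic N] [Finite N] [Group H]
    {θ : H →* MulAut N} (hθ : Function.Injective θ) (hcop : (Nat.card N).Coprime (Nat.card H))
    {σ : N ⋊[θ] H →* N ⋊[θ] H} (hσ : Function.Injective σ) (γ : N ⋊[θ] H) :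
    (σ γ).right = γ.right := by
  have hright (x : N) : (σ (inl x)).right = 1 := by
    rw [← orderOf_eq_one_iff]
    refine Nat.eq_one_of_dvd_coprimes hcop ?_ (orderOf_dvd_natCard _)
    exact (orderOf_map_dvd ((rightHom.comp σ).comp inl) x).trans (orderOf_dvd_natCard x)
  have hinl (x : N) : σ (inl x) = inl (σ (inl x)).left := by
    ext <;> simp [hright]
  let τ : N →* N := MonoidHom.mk' (fun x => (σ (inl x)).left) fun x y => by simp [hright]
  have hτ : ∀ x, σ (inl x) = inl (τ x) := hinl
  have hτ_surj : Function.Surjective τ := Finite.surjective_of_injective fun x y hxy =>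
    inl_injective (hσ (by rw [hτ, hτ, hxy]))
  obtain ⟨k, hk⟩ := τ.map_cyclic
  have hτ_conj (h : H) (x : N) : θ h (τ x) = θ (σ (inr h)).right (τ x) := by
    have hconj := conj_left_mul_apply_right hτ h x
    rwa [mul_inv_cancel_comm, hk, ← map_zpow, ← hk] at hconj
  have hH (h : H) : (σ (inr h)).right = h := by
    refine hθ (MulEquiv.ext fun x => ?_)
    obtain ⟨x, rfl⟩ := hτ_surj x
    exact (hτ_conj h x).symm
  rw [← inl_left_mul_inr_right γ, map_mul, mul_right, hright, one_mul, hH]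
  simp

theorem map_commutatorElement_eq_of_injective_extension {G N H : Type*} [Group G] [CommGroup N]
    [IsCyclic N] [Finite N] [Group H] {θ : H →* MulAut N} (hθ : Function.Injective θ)
    (hcop : (Nat.card N).Coprime (Nat.card H)) {α : H →* MulAut G} {s t : H} (hst : Commute s t)
    {y z : G} (hs : α s = MulAut.conj y) (ht : α t = MulAut.conj z)
    {ψ : G ⋊[α.comp rightHom] (N ⋊[θ] H) →* G ⋊[α.comp rightHom] (N ⋊[θ] H)}
    (hinj : Function.Injective ψ) {β : G →* G} (hβ : Function.Surjective β)
    (hψ : ∀ x, ψ (inl x) = inl (β x)) : β ⁅y, z⁆ = ⁅y, z⁆ := by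
  have hright (h : H) : α (ψ (inr (inr h))).right.right = α h := congrArg α <|
    right_map_eq_right hθ hcop (injective_right_of_extends hinj hψ hβ) (inr h)
  exact map_commutatorElement_eq_of_extends hψ hβ (hst.map inr) hs ht (hright s) (hright t)

end SemidirectProducts

section ClockShift

open Matrix
open scoped commutatorElement

variable {n κ : Type*} [Fintype n] [DecidableEq n] {m : ℕ} [NeZero m]

/-- The shift representation `a ↦ Sᵃ` of `ℤ/m` on `ℂⁿ ≅ ℂᵐ ⊗ ℂ^κ`, where `S` permutes the standard
basis of the first factor cyclically. The tensor decomposition is given by the labelling `e` of the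
basis. -/
noncomputable def shift (e : n ≃ ZMod m × κ) : Multiplicative (ZMod m) →* unitaryGroup n ℂ :=
  permUnitary.comp <| MonoidHom.mk'
    (fun a => e.symm.permCongr ((Equiv.addLeft a.toAdd).prodCongr (Equiv.refl κ))) fun a b => by
      ext i
      simp [Prod.map]

/-- The clock representation `b ↦ Cᵇ` of `ℤ/m` on `ℂⁿ ≅ ℂᵐ ⊗ ℂ^κ`, where `C` multiplies the `j`-th
basis vector of the first factor by `exp (2πij/m)`. -/
noncomputable def clock (e : n ≃ ZMod m × κ) : Multiplicative (ZMod m) →* unitaryGroup n ℂ :=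
  diagonalUnitary.comp <| MonoidHom.mk' (fun b i => ZMod.toCircle (b.toAdd * (e i).1))
    fun a b => by
      ext i
      simp [add_mul, AddChar.map_add_eq_mul]

theorem commutatorElement_shift_clock (e : n ≃ ZMod m × κ) (a b : Multiplicative (ZMod m)) :
    ⁅shift e a, clock e b⁆ =
      diagonalUnitary fun _ => ZMod.toCircle (-(a.toAdd * b.toAdd)) := by
  have hshift : shift e a = (shift e a⁻¹)⁻¹ := by rw [map_inv, inv_inv]
  rw [commutatorElement_def, hshift, inv_inv]
  refine (congrArg (· * _) (inv_permUnitary_mul_diagonalUnitary_mul _ _)).trans ?_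
  rw [clock, MonoidHom.comp_apply, ← map_inv, ← map_mul]
  congr 1
  ext i
  simp only [MonoidHom.mk'_apply, toAdd_inv, Pi.mul_apply, Function.comp_apply,
    Equiv.permCongr_apply, Equiv.symm_symm, Equiv.prodCongr_apply, Equiv.coe_addLeft,
    Equiv.coe_refl, Equiv.apply_symm_apply, Prod.map_fst, Pi.inv_apply,
    ← AddChar.map_neg_eq_inv, ← AddChar.map_add_eq_mul]
  ring_nf

theorem commute_conj_shift_conj_clock (e : n ≃ ZMod m × κ) (a b : Multiplicative (ZMod m)) :
    Commute ((MulAut.conj.comp (shift e)) a) ((MulAut.conj.comp (clock e)) b) := by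
  rw [← commutatorElement_eq_one_iff_commute, MonoidHom.comp_apply, MonoidHom.comp_apply,
    ← map_commutatorElement, commutatorElement_shift_clock]
  ext1 x
  rw [MulAut.conj_apply, MulAut.one_apply, mul_inv_eq_iff_eq_mul]
  exact (mul_inv_eq_iff_eq_mul.mp (conj_diagonalUnitary_const x _)).symm

/-- The action of `(ℤ/m)²` on `U(n)` in which `(a, b)` acts as conjugation by `Sᵃ Cᵇ`. -/
noncomputable def clockShiftAction (e : n ≃ ZMod m × κ) :
    Multiplicative (ZMod m) × Multiplicative (ZMod m) →* MulAut (unitaryGroup n ℂ) :=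
  (MulAut.conj.comp (shift e)).noncommCoprod (MulAut.conj.comp (clock e))
    (commute_conj_shift_conj_clock e)

theorem clockShiftAction_apply (e : n ≃ ZMod m × κ)
    (h : Multiplicative (ZMod m) × Multiplicative (ZMod m)) :
    clockShiftAction e h = MulAut.conj (shift e h.1 * clock e h.2) := by
  rw [map_mul]
  rfl

theorem continuous_clockShiftAction (e : n ≃ ZMod m × κ)
    (h : Multiplicative (ZMod m) × Multiplicative (ZMod m)) :
    Continuous (clockShiftAction e h) := by
  rw [clockShiftAction_apply]
  exact (continuous_const.mul continuous_id).mul continuous_const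

theorem continuous_symm_clockShiftAction (e : n ≃ ZMod m × κ)
    (h : Multiplicative (ZMod m) × Multiplicative (ZMod m)) :
    Continuous (clockShiftAction e h).symm := by
  have hsymm : (clockShiftAction e h).symm = clockShiftAction e h⁻¹ := (map_inv _ h).symm
  rw [hsymm]
  exact continuous_clockShiftAction e h⁻¹

end ClockShift

section CubeRoots

/-- The action of `(ℤ/3)²` on `ℤ/91` in which `(a, b)` acts as multiplication by `79ᵃ 29ᵇ`. Modulo
`(7, 13)`, these units are `79 ≡ (2, 1)` and `29 ≡ (1, 3)`, and `2`, `3` are primitive cube roots of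
unity modulo `7`, `13`. -/
def cubeRootAction :
    Multiplicative (ZMod 3) × Multiplicative (ZMod 3) →* MulAut (Multiplicative (ZMod 91)) :=
  (MulAutMultiplicative (ZMod 91)).symm.toMonoidHom.comp <| AddAut.mulLeft.comp
    { toFun p := (⟨79, 53, by decide, by decide⟩ : (ZMod 91)ˣ) ^ p.1.toAdd.val *
        (⟨29, 22, by decide, by decide⟩ : (ZMod 91)ˣ) ^ p.2.toAdd.val
      map_one' := by decide
      map_mul' := by decide }

theorem cubeRootAction_injective : Function.Injective cubeRootAction := by
  rw [injective_iff_map_eq_one]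
  intro p hp
  have h_one := DFunLike.congr_fun hp (Multiplicative.ofAdd 1)
  clear hp
  revert p
  decide

end CubeRoots

section ComplexConjugation

open Matrix

variable {n : Type*} [Fintype n] [DecidableEq n]

/-- Entrywise complex conjugation as an endomorphism of `U(n)`. -/
def conjUnitary : unitaryGroup n ℂ →* unitaryGroup n ℂ :=
  MonoidHom.mk' UnitaryGroup.map_star fun x y => by
    ext i j
    simp [mul_apply]

theorem coe_conjUnitary (x : unitaryGroup n ℂ) :
    (conjUnitary x : Matrix n n ℂ) = (x : Matrix n n ℂ).map (starRingEnd ℂ) :=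
  rfl

theorem conjUnitary_surjective : Function.Surjective (conjUnitary (n := n)) := fun x =>
  ⟨conjUnitary x, by ext; simp [coe_conjUnitary]⟩

theorem conjUnitary_diagonalUnitary (t : n → Circle) :
    conjUnitary (diagonalUnitary t) = diagonalUnitary t⁻¹ := by
  refine Subtype.ext ((diagonal_map (map_zero (starRingEnd ℂ))).trans (congrArg diagonal ?_))
  exact funext fun i => (Circle.coe_inv_eq_conj (t i)).symm

end ComplexConjugation

section Extensions

open Matrix SemidirectProduct
open scoped commutatorElement

theorem toCircle_neg_one_inv_ne {m : ℕ} [NeZero m] (hm : 2 < m) :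
    (ZMod.toCircle (-1 : ZMod m))⁻¹ ≠ ZMod.toCircle (-1 : ZMod m) := by
  have := Fact.mk hm
  rw [← AddChar.map_neg_eq_inv, neg_neg]
  exact ZMod.injective_toCircle.ne (ZMod.neg_one_ne_one).symm

variable {n κ N : Type*} [Fintype n] [DecidableEq n] {m : ℕ} [NeZero m] {e : n ≃ ZMod m × κ}
  [CommGroup N] [IsCyclic N] [Finite N]
  {θ : Multiplicative (ZMod m) × Multiplicative (ZMod m) →* MulAut N}
  {ψ : unitaryGroup n ℂ ⋊[(clockShiftAction e).comp rightHom] (N ⋊[θ] _) →*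
    unitaryGroup n ℂ ⋊[(clockShiftAction e).comp rightHom] (N ⋊[θ] _)}

theorem map_scalar_eq_of_extends (hθ : Function.Injective θ) (hcop : (Nat.card N).Coprime (m * m))
    (hψ : Function.Injective ψ) {β : unitaryGroup n ℂ →* unitaryGroup n ℂ}
    (hβ : Function.Surjective β) (hext : ∀ x, ψ (inl x) = inl (β x)) :
    β (diagonalUnitary fun _ => ZMod.toCircle (-1 : ZMod m)) =
      diagonalUnitary fun _ => ZMod.toCircle (-1 : ZMod m) := by
  have hcomm := commutatorElement_shift_clock e (.ofAdd 1) (.ofAdd 1)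
  rw [toAdd_ofAdd, mul_one] at hcomm
  rw [← hcomm]
  refine map_commutatorElement_eq_of_injective_extension hθ (by simpa using hcop)
    (Commute.all (Multiplicative.ofAdd 1, 1) (1, Multiplicative.ofAdd 1)) ?_ ?_ hψ hβ hext <;>
  simp only [clockShiftAction_apply, map_one, mul_one, one_mul]

theorem exists_eq_conj_of_extends (hm : 2 < m) [Nonempty n] (hθ : Function.Injective θ)
    (hcop : (Nat.card N).Coprime (m * m)) (hψ : Function.Injective ψ)
    {β : unitaryGroup n ℂ →* unitaryGroup n ℂ} (hβ : Function.Bijective β)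
    (hβ_cont : Continuous β) (hext : ∀ x, ψ (inl x) = inl (β x)) :
    ∃ g, ∀ x, β x = g * x * g⁻¹ := by
  have hn : 2 < Fintype.card n := by
    obtain ⟨i⟩ := ‹Nonempty n›
    refine hm.trans_le ?_
    rw [← ZMod.card m]
    exact Fintype.card_le_of_injective (fun a => e.symm (a, (e i).2)) fun a b => by simp
  exact exists_eq_conj_of_trace_map_eq hβ.2 <| trace_map_eq_of_map_scalar_eq hn hβ_cont hβ.1
    (toCircle_neg_one_inv_ne hm) <| map_scalar_eq_of_extends hθ hcop hψ hβ.2 hext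

theorem not_extends_conjUnitary (hm : 2 < m) [Nonempty n] (hθ : Function.Injective θ)
    (hcop : (Nat.card N).Coprime (m * m)) (hψ : Function.Injective ψ) :
    ¬ ∀ x, ψ (inl x) = inl (conjUnitary x) := fun hext => by
  have h := map_scalar_eq_of_extends hθ hcop hψ conjUnitary_surjective hext
  rw [conjUnitary_diagonalUnitary] at h
  exact toCircle_neg_one_inv_ne hm
    (congrFun (diagonalUnitary_injective h) (Classical.arbitrary n))

end Extensions

/-- For every positive integer `d` there are `n` divisible by `d`, a finite
(discrete) group `Γ` and an action of `Γ` on `U(n)` by topological-group automorphisms such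
that the complex-conjugation automorphism of `U(n)` does not extend to a topological-group
automorphism of `U(n) ⋊ Γ`; consequently no outer topological-group automorphism of `U(n)`
extends to `U(n) ⋊ Γ`. -/
theorem exists_unitary_semidirect_with_no_outer_lift :
    ∀ d : ℕ, 0 < d →
    ∃ (n : ℕ) (Γ : Type) (_ : Group Γ) (_ : Finite Γ) (_ : TopologicalSpace Γ)
      (_ : DiscreteTopology Γ) (act : Γ →* MulAut (Matrix.unitaryGroup (Fin n) ℂ)),
      d ∣ n ∧ 0 < n ∧
      (∀ γ : Γ, Continuous ⇑(act γ) ∧ Continuous ⇑(act γ).symm) ∧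
      (¬ ∃ ψ : (Matrix.unitaryGroup (Fin n) ℂ ⋊[act] Γ) ≃*
            (Matrix.unitaryGroup (Fin n) ℂ ⋊[act] Γ),
          Continuous ⇑ψ ∧ Continuous ⇑ψ.symm ∧
          ∀ x : Matrix.unitaryGroup (Fin n) ℂ,
            (ψ (SemidirectProduct.inl x)).right = 1 ∧
            ((ψ (SemidirectProduct.inl x)).left : Matrix (Fin n) (Fin n) ℂ) =
              (x : Matrix (Fin n) (Fin n) ℂ).map (starRingEnd ℂ)) ∧
      (∀ β : Matrix.unitaryGroup (Fin n) ℂ ≃* Matrix.unitaryGroup (Fin n) ℂ,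
        Continuous ⇑β → Continuous ⇑β.symm →
        (¬ ∃ g : Matrix.unitaryGroup (Fin n) ℂ, ∀ x, β x = g * x * g⁻¹) →
        ¬ ∃ ψ : (Matrix.unitaryGroup (Fin n) ℂ ⋊[act] Γ) ≃*
              (Matrix.unitaryGroup (Fin n) ℂ ⋊[act] Γ),
            Continuous ⇑ψ ∧ Continuous ⇑ψ.symm ∧
            ∀ x, ψ (SemidirectProduct.inl x) = SemidirectProduct.inl (β x)) := by
  intro d hd
  have : NeZero (3 * d) := ⟨by positivity⟩
  let e : Fin (3 * d) ≃ ZMod 3 × Fin d := finProdFinEquiv.symm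
  have hcop : (Nat.card (Multiplicative (ZMod 91))).Coprime (3 * 3) := by
    rw [Nat.card_eq_fintype_card, Fintype.card_multiplicative, ZMod.card]
    norm_num
  refine ⟨3 * d, Multiplicative (ZMod 91) ⋊[cubeRootAction] _, inferInstance,
    .of_equiv _ SemidirectProduct.equivProd.symm, ⊥, discreteTopology_bot _,
    (clockShiftAction e).comp SemidirectProduct.rightHom, dvd_mul_left d 3, by positivity,
    fun γ => ⟨continuous_clockShiftAction e _, continuous_symm_clockShiftAction e _⟩, ?_, ?_⟩
  · rintro ⟨ψ, -, -, hψ⟩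
    exact not_extends_conjUnitary (ψ := ψ.toMonoidHom) (by norm_num) cubeRootAction_injective
      hcop ψ.injective fun x =>
        SemidirectProduct.ext (Subtype.ext (hψ x).2) (hψ x).1
  · rintro β hβ - hβ_outer ⟨ψ, -, -, hψ⟩
    exact hβ_outer <| exists_eq_conj_of_extends (ψ := ψ.toMonoidHom) (β := β.toMonoidHom)
      (by norm_num) cubeRootAction_injective hcop ψ.injective β.bijective hβ hψ
end
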